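/- arXiv:2107.10450 — 6 statements merged into one kernel-verified Lean document; each statement's English description precedes it below -/
import Mathlib

section
/- Let t be a real number with 0 ≤ t ≤ 1/4, let σ > 0 and σ̂ > 0 be reals, and let D be a real number such that |D| ≤ σ²·t and (1 − √t)·σ² ≤ σ̂² ≤ (1 + √t)·σ². Then ln(σ̂/σ) + (σ² − σ̂²)/(2σ̂²) + D/(2σ̂²) ≤ 3t. (In the paper this is applied with t = ε·p_i/(n·d_avg) at each node i to conclude that the node-wise KL contribution d_CP(α*_i, α̂_i) is at most 3ε·p_i/(n·d_avg), and hence that the total KL divergence is at most 3ε.) -/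
/-!
Write `r = σhat² / σ²`. Bounding the logarithm by `log r ≤ r - 1` turns the variance part of the
divergence, `(log r + 1 / r - 1) / 2`, into the rational function `(r - 1)² / (2 * r)`. This is
quadratic in the relative error `r - 1`, which is why an error of size `√t` in the variance costs
only `O(t)`; the lower bound `1 - √t ≤ r` controls the denominators.
-/

theorem log_le_sq_sub_one_div_two {x : ℝ} (hx : 0 < x) : Real.log x ≤ (x ^ 2 - 1) / 2 := by
  have hlog_sq : Real.log (x ^ 2) ≤ x ^ 2 - 1 := Real.log_le_sub_one_of_pos (pow_pos hx 2)
  rw [Real.log_pow, Nat.cast_ofNat] at hlog_sq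
  linarith

section

variable {σ τ δ : ℝ}

theorem log_div_add_sq_sub_sq_div_le (hσ : 0 < σ) (hτ : 0 < τ) :
    Real.log (τ / σ) + (σ ^ 2 - τ ^ 2) / (2 * τ ^ 2)
      ≤ (τ ^ 2 - σ ^ 2) ^ 2 / (2 * σ ^ 2 * τ ^ 2) :=
  calc
    _ ≤ ((τ / σ) ^ 2 - 1) / 2 + (σ ^ 2 - τ ^ 2) / (2 * τ ^ 2) := by
      gcongr
      exact log_le_sq_sub_one_div_two (div_pos hτ hσ)
    _ = (τ ^ 2 - σ ^ 2) ^ 2 / (2 * σ ^ 2 * τ ^ 2) := by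
      field_simp
      ring

theorem log_div_add_sq_sub_sq_div_le_of_rel_error (hσ : 0 < σ) (hτ : 0 < τ) (hδ : δ < 1)
    (hlow : (1 - δ) * σ ^ 2 ≤ τ ^ 2) (hhigh : τ ^ 2 ≤ (1 + δ) * σ ^ 2) :
    Real.log (τ / σ) + (σ ^ 2 - τ ^ 2) / (2 * τ ^ 2) ≤ δ ^ 2 / (2 * (1 - δ)) := by
  have hδ' : 0 < 1 - δ := sub_pos.2 hδ
  have hsq : (τ ^ 2 - σ ^ 2) ^ 2 ≤ (δ * σ ^ 2) ^ 2 := sq_le_sq' (by linarith) (by linarith)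
  calc
    _ ≤ (τ ^ 2 - σ ^ 2) ^ 2 / (2 * σ ^ 2 * τ ^ 2) := log_div_add_sq_sub_sq_div_le hσ hτ
    _ ≤ (δ * σ ^ 2) ^ 2 / (2 * σ ^ 2 * ((1 - δ) * σ ^ 2)) := by gcongr
    _ = δ ^ 2 / (2 * (1 - δ)) := by field_simp

theorem div_two_mul_sq_le {η D : ℝ} (hσ : 0 < σ) (hδ : δ < 1) (hη : 0 ≤ η)
    (hD : D ≤ σ ^ 2 * η) (hlow : (1 - δ) * σ ^ 2 ≤ τ ^ 2) :
    D / (2 * τ ^ 2) ≤ η / (2 * (1 - δ)) := by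
  have hδ' : 0 < 1 - δ := sub_pos.2 hδ
  calc
    D / (2 * τ ^ 2) ≤ σ ^ 2 * η / (2 * τ ^ 2) := by gcongr
    _ ≤ σ ^ 2 * η / (2 * ((1 - δ) * σ ^ 2)) := by gcongr
    _ = η / (2 * (1 - δ)) := by field_simp

end

theorem div_one_sub_sqrt_le_three_mul {t : ℝ} (ht0 : 0 ≤ t) (ht1 : t ≤ 4 / 9) :
    t / (1 - √t) ≤ 3 * t := by
  have hsqrt : √t ≤ 2 / 3 := Real.sqrt_le_iff.2 ⟨by norm_num, by linarith⟩
  rw [div_le_iff₀ (by linarith)]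
  nlinarith

theorem stmt_0_general {t σ σhat D : ℝ} (ht0 : 0 ≤ t) (ht1 : t < 1)
    (hσ : 0 < σ) (hσhat : 0 < σhat) (hD : D ≤ σ ^ 2 * t)
    (hlow : (1 - √t) * σ ^ 2 ≤ σhat ^ 2) (hhigh : σhat ^ 2 ≤ (1 + √t) * σ ^ 2) :
    Real.log (σhat / σ) + (σ ^ 2 - σhat ^ 2) / (2 * σhat ^ 2) + D / (2 * σhat ^ 2)
      ≤ t / (1 - √t) := by
  have hsqrt : √t < 1 := (Real.sqrt_lt_sqrt ht0 ht1).trans_eq Real.sqrt_one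
  calc
    _ ≤ √t ^ 2 / (2 * (1 - √t)) + t / (2 * (1 - √t)) :=
      add_le_add (log_div_add_sq_sub_sq_div_le_of_rel_error hσ hσhat hsqrt hlow hhigh)
        (div_two_mul_sq_le hσ hsqrt ht0 hD hlow)
    _ = t / (1 - √t) := by
      rw [Real.sq_sqrt ht0, ← add_div, ← two_mul, mul_div_mul_left _ _ two_ne_zero]

/-- The analytic core of Proposition 2.10 (Implication of KL decomposition):
if `|D| ≤ σ²·t` (Condition 1) and `(1 − √t)·σ² ≤ σ̂² ≤ (1 + √t)·σ²` (Condition 2)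
with `0 ≤ t ≤ 1/4`, then the node-wise KL contribution
`ln(σ̂/σ) + (σ² − σ̂²)/(2σ̂²) + D/(2σ̂²)` is at most `3t`. -/
theorem stmt_0 (t σ σhat D : ℝ) (ht0 : 0 ≤ t) (ht1 : t ≤ 1 / 4)
    (hσ : 0 < σ) (hσhat : 0 < σhat)
    (hD : |D| ≤ σ ^ 2 * t)
    (hlow : (1 - Real.sqrt t) * σ ^ 2 ≤ σhat ^ 2)
    (hhigh : σhat ^ 2 ≤ (1 + Real.sqrt t) * σ ^ 2) :
    Real.log (σhat / σ) + (σ ^ 2 - σhat ^ 2) / (2 * σhat ^ 2) + D / (2 * σhat ^ 2)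
      ≤ 3 * t :=
  (stmt_0_general ht0 (by linarith) hσ hσhat (le_of_abs_le hD) hlow hhigh).trans
    (div_one_sub_sqrt_le_three_mul ht0 (by linarith))
end

section
/- Let G be a DAG on nodes 1,…,n with parent sets π_i ⊆ {1,…,i−1}. Let P and Q be Gaussian Bayesian networks on G with parameters (A_i, σ_i)_{i=1}^n and (Â_i, σ̂_i)_{i=1}^n respectively (all σ_i, σ̂_i > 0). For each i, let M_i be the covariance matrix of the parent variables (X_j)_{j∈π_i} under P, and let Δ_i = Â_i − A_i. Then the Kullback–Leibler divergence satisfies KL(P‖Q) = Σ_{i=1}^n [ ln(σ̂_i/σ_i) + (σ_i² − σ̂_i²)/(2σ̂_i²) + Δ_iᵀ M_i Δ_i/(2σ̂_i²) ]. -/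
open MeasureTheory ProbabilityTheory Matrix

/-- Kullback–Leibler divergence `KL(P‖Q) = ∫ log(dP/dQ) dP`. -/
noncomputable def klDiv {α : Type*} [MeasurableSpace α] (P Q : Measure α) : ℝ :=
  ∫ x, Real.log ((P.rnDeriv Q) x).toReal ∂P

/-- The Gaussian Bayesian network with coefficient matrix `B` and noise standard
deviations `σ`: the pushforward of the product Gaussian `⊗ᵢ N(0, σᵢ²)` under the
linear map `η ↦ (I − B)⁻¹ η`. -/
noncomputable def gaussianBN {n : ℕ} (B : Matrix (Fin n) (Fin n) ℝ) (σ : Fin n → ℝ) :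
    Measure (Fin n → ℝ) :=
  Measure.map (fun η => (1 - B)⁻¹.mulVec η)
    (Measure.pi fun i => gaussianReal 0 ((σ i ^ 2).toNNReal))

/-!
Since `I - B` is unitriangular, the network has density `∏ᵢ φ_{σᵢ}(((I - B) x)ᵢ)`, so the
log-likelihood ratio is a sum over nodes of quadratics in the residuals `((I - B) x)ᵢ` and
`((I - B̂) x)ᵢ`. Under `P` the vector `(I - B) X` is the noise `η`, whence
`((I - B̂) X)ᵢ = ηᵢ - Δᵢ ⬝ X`. The noise `ηᵢ` is uncorrelated with the parents of `i`, as these are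
combinations of earlier noises only, and therefore `E[((I - B̂) X)ᵢ²] = σᵢ² + Δᵢᵀ Mᵢ Δᵢ`.
-/

section Density

variable {α β : Type*} [MeasurableSpace α] [MeasurableSpace β]

lemma klDiv_withDensity_ofReal (μ : Measure α) [SigmaFinite μ] {f g : α → ℝ}
    (hf : Measurable f) (hg : Measurable g) (hg_pos : ∀ x, 0 < g x) :
    klDiv (μ.withDensity fun x => ENNReal.ofReal (f x))
        (μ.withDensity fun x => ENNReal.ofReal (g x))
      = ∫ x, (Real.log (f x) - Real.log (g x)) ∂μ.withDensity fun x => ENNReal.ofReal (f x) := by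
  set P := μ.withDensity fun x => ENNReal.ofReal (f x)
  have hf_pos : ∀ᵐ x ∂P, 0 < f x :=
    (ae_withDensity_iff hf.ennreal_ofReal).2 <| ae_of_all _ fun x hx => by simpa using hx
  have rnDeriv_right := withDensity_absolutelyContinuous μ (fun x => ENNReal.ofReal (f x)) <|
    Measure.rnDeriv_withDensity_right P μ hg.ennreal_ofReal.aemeasurable
      (ae_of_all _ fun x => by simp [hg_pos x]) (ae_of_all _ fun x => ENNReal.ofReal_ne_top)
  have rnDeriv_left := withDensity_absolutelyContinuous μ (fun x => ENNReal.ofReal (f x)) <|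
    Measure.rnDeriv_withDensity μ hf.ennreal_ofReal
  refine integral_congr_ae ?_
  filter_upwards [rnDeriv_right, rnDeriv_left, hf_pos] with x h_right h_left hfx
  rw [h_right, h_left, ENNReal.toReal_mul, ENNReal.toReal_inv, ENNReal.toReal_ofReal hfx.le,
    ENNReal.toReal_ofReal (hg_pos x).le, Real.log_mul (inv_ne_zero (hg_pos x).ne') hfx.ne',
    Real.log_inv, neg_add_eq_sub]

lemma map_withDensity_comp (μ : Measure α) {T : α → β} {g : β → ENNReal}
    (hT : Measurable T) (hg : Measurable g) :
    (μ.withDensity (g ∘ T)).map T = (μ.map T).withDensity g := by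
  ext s hs
  rw [Measure.map_apply hT hs, withDensity_apply _ (hT hs), withDensity_apply _ hs,
    setLIntegral_map hs hg hT, Function.comp_def]

lemma pi_withDensity_ofReal {ι : Type*} [Fintype ι] {E : ι → Type*}
    [∀ i, MeasurableSpace (E i)] (μ : ∀ i, Measure (E i)) [∀ i, SigmaFinite (μ i)]
    {f : ∀ i, E i → ℝ} (hf : ∀ i, Integrable (f i) (μ i)) (hf_nonneg : ∀ i x, 0 ≤ f i x) :
    Measure.pi (fun i => (μ i).withDensity fun x => ENNReal.ofReal (f i x))
      = (Measure.pi μ).withDensity fun x => ENNReal.ofReal (∏ i, f i (x i)) := by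
  refine Measure.pi_eq fun s hs => ?_
  have hf_restrict : ∀ i, Integrable (f i) ((μ i).restrict (s i)) := fun i => (hf i).restrict
  rw [withDensity_apply _ (MeasurableSet.univ_pi hs), Measure.restrict_pi_pi,
    ← ofReal_integral_eq_lintegral_ofReal (Integrable.fintype_prod_dep hf_restrict)
      (ae_of_all _ fun x => Finset.prod_nonneg fun i _ => hf_nonneg i (x i)),
    integral_fintype_prod_eq_prod,
    ENNReal.ofReal_prod_of_nonneg fun i _ => integral_nonneg (hf_nonneg i)]
  refine Finset.prod_congr rfl fun i _ => ?_
  rw [withDensity_apply _ (hs i),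
    ofReal_integral_eq_lintegral_ofReal (hf_restrict i) (ae_of_all _ (hf_nonneg i))]

lemma pi_gaussianReal_eq_withDensity {ι : Type*} [Fintype ι] (m : ι → ℝ) {v : ι → NNReal}
    (hv : ∀ i, v i ≠ 0) :
    Measure.pi (fun i => gaussianReal (m i) (v i)) = volume.withDensity
      fun x : ι → ℝ => ENNReal.ofReal (∏ i, gaussianPDFReal (m i) (v i) (x i)) := by
  simp_rw [gaussianReal_of_var_ne_zero _ (hv _), gaussianPDF_def]
  exact pi_withDensity_ofReal _ (fun i => integrable_gaussianPDFReal _ _)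
    fun i => gaussianPDFReal_nonneg _ _

end Density

section GaussianLogDensity

lemma log_gaussianPDFReal (m : ℝ) {v : NNReal} (hv : v ≠ 0) (x : ℝ) :
    Real.log (gaussianPDFReal m v x)
      = -(Real.log (2 * Real.pi * v) / 2) - (x - m) ^ 2 / (2 * v) := by
  have : (0 : ℝ) < v := by exact_mod_cast pos_iff_ne_zero.2 hv
  rw [gaussianPDFReal, Real.log_mul (by positivity) (Real.exp_ne_zero _), Real.log_exp,
    Real.log_inv, Real.log_sqrt (by positivity), neg_div, ← sub_eq_add_neg]

lemma log_gaussianPDFReal_sub_log_gaussianPDFReal {s t : ℝ} (hs : s ≠ 0) (ht : t ≠ 0)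
    (x y : ℝ) :
    Real.log (gaussianPDFReal 0 (s ^ 2).toNNReal x)
        - Real.log (gaussianPDFReal 0 (t ^ 2).toNNReal y)
      = Real.log (t / s) + y ^ 2 / (2 * t ^ 2) - x ^ 2 / (2 * s ^ 2) := by
  -- `Real.log` is even, so the identity also holds for negative `u`.
  have log_var : ∀ u : ℝ, u ≠ 0 →
      Real.log (2 * Real.pi * u ^ 2) = Real.log (2 * Real.pi) + 2 * Real.log u := fun u hu => by
    rw [Real.log_mul (by positivity) (by positivity), Real.log_pow, Nat.cast_ofNat]
  rw [log_gaussianPDFReal 0 (by simpa using hs),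
    log_gaussianPDFReal 0 (by simpa using ht),
    Real.coe_toNNReal _ (sq_nonneg s), Real.coe_toNNReal _ (sq_nonneg t),
    log_var s hs, log_var t ht, Real.log_div ht hs]
  ring

end GaussianLogDensity

section SecondMoments

lemma integral_sq_gaussianReal_zero (v : NNReal) : ∫ x, x ^ 2 ∂gaussianReal 0 v = v := by
  rw [← variance_fun_id_gaussianReal (μ := 0),
    variance_of_integral_eq_zero aemeasurable_id' integral_id_gaussianReal]

variable {Ω ι κ : Type*} [MeasurableSpace Ω]

lemma memLp_mulVec_apply [Fintype ι] {μ : Measure Ω} {p : ENNReal} {X : Ω → ι → ℝ}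
    (hX : ∀ k, MemLp (fun ω => X ω k) p μ) (M : Matrix κ ι ℝ) (j : κ) :
    MemLp (fun ω => (M *ᵥ X ω) j) p μ :=
  memLp_finsetSum _ fun k _ => (hX k).const_mul (M j k)

lemma integral_sub_sum_mul_sq {μ : Measure Ω} {Y : Ω → ℝ} {X : ι → Ω → ℝ} {s : Finset ι}
    (hY : MemLp Y 2 μ) (hX : ∀ j ∈ s, MemLp (X j) 2 μ)
    (h_orth : ∀ j ∈ s, ∫ ω, Y ω * X j ω ∂μ = 0) (c : ι → ℝ) :
    ∫ ω, (Y ω - ∑ j ∈ s, c j * X j ω) ^ 2 ∂μ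
      = ∫ ω, Y ω ^ 2 ∂μ + ∑ j ∈ s, ∑ k ∈ s, c j * (∫ ω, X j ω * X k ω ∂μ) * c k := by
  have expand : ∀ ω, (Y ω - ∑ j ∈ s, c j * X j ω) ^ 2
      = Y ω ^ 2 - ∑ j ∈ s, 2 * c j * (Y ω * X j ω)
        + ∑ j ∈ s, ∑ k ∈ s, c j * c k * (X j ω * X k ω) := fun ω => by
    rw [sub_sq, sq (∑ j ∈ s, c j * X j ω), Finset.sum_mul_sum, Finset.mul_sum]
    simp only [mul_assoc, mul_left_comm]
  have int_cross : ∀ j ∈ s, Integrable (fun ω => 2 * c j * (Y ω * X j ω)) μ :=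
    fun j hj => (hY.integrable_mul (hX j hj)).const_mul _
  have int_quad : ∀ j ∈ s, ∀ k ∈ s, Integrable (fun ω => c j * c k * (X j ω * X k ω)) μ :=
    fun j hj k hk => ((hX j hj).integrable_mul (hX k hk)).const_mul _
  have int_quad_sum : ∀ j ∈ s, Integrable (fun ω => ∑ k ∈ s, c j * c k * (X j ω * X k ω)) μ :=
    fun j hj => integrable_finsetSum _ (int_quad j hj)
  have cross_eq_zero : ∫ ω, ∑ j ∈ s, 2 * c j * (Y ω * X j ω) ∂μ = 0 := by
    rw [integral_finsetSum _ int_cross]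
    exact Finset.sum_eq_zero fun j hj => by rw [integral_const_mul, h_orth j hj, mul_zero]
  simp_rw [expand]
  have int_sub : Integrable (fun ω => Y ω ^ 2 - ∑ j ∈ s, 2 * c j * (Y ω * X j ω)) μ :=
    hY.integrable_sq.sub (integrable_finsetSum _ int_cross)
  rw [integral_add int_sub (integrable_finsetSum _ int_quad_sum),
    integral_sub hY.integrable_sq (integrable_finsetSum _ int_cross), cross_eq_zero, sub_zero,
    integral_finsetSum _ int_quad_sum]
  congr 1
  refine Finset.sum_congr rfl fun j hj => ?_
  rw [integral_finsetSum _ (int_quad j hj)]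
  exact Finset.sum_congr rfl fun k _ => by rw [integral_const_mul, mul_right_comm]

variable [Fintype ι] {μ : ι → Measure ℝ} [∀ i, IsProbabilityMeasure (μ i)]

lemma memLp_eval_pi {p : ENNReal} {i : ι} (h : MemLp id p (μ i)) :
    MemLp (fun η : ι → ℝ => η i) p (Measure.pi μ) :=
  h.comp_measurePreserving (measurePreserving_eval μ i)

lemma integral_eval_mul_eval_pi [DecidableEq ι] (h_mean : ∀ i, ∫ x, x ∂μ i = 0) (i k : ι) :
    ∫ η, η i * η k ∂Measure.pi μ = if i = k then ∫ x, x ^ 2 ∂μ i else 0 := by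
  split_ifs with hik
  · subst hik
    simp_rw [← sq]
    exact integral_comp_eval (μ := μ) (f := fun x : ℝ => x ^ 2) (by fun_prop)
  · have h_indep : iIndepFun (fun i (η : ι → ℝ) => η i) (Measure.pi μ) :=
      iIndepFun_pi (X := fun _ x => x) fun _ => aemeasurable_id
    rw [(h_indep.indepFun hik).integral_fun_mul_eq_mul_integral
      (measurable_pi_apply i).aestronglyMeasurable (measurable_pi_apply k).aestronglyMeasurable,
      integral_eval, h_mean, zero_mul]

lemma integral_eval_mul_mulVec_pi (h_mean : ∀ i, ∫ x, x ∂μ i = 0)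
    (h_memLp : ∀ i, MemLp id 2 (μ i)) (M : Matrix κ ι ℝ) (i : ι) (j : κ) :
    ∫ η, η i * (M *ᵥ η) j ∂Measure.pi μ = M j i * ∫ x, x ^ 2 ∂μ i := by
  classical
  have int_mul : ∀ k, Integrable (fun η : ι → ℝ => M j k * (η i * η k)) (Measure.pi μ) := fun k =>
    ((memLp_eval_pi (h_memLp i)).integrable_mul (memLp_eval_pi (h_memLp k))).const_mul (M j k)
  calc ∫ η, η i * (M *ᵥ η) j ∂Measure.pi μ
      = ∫ η, ∑ k, M j k * (η i * η k) ∂Measure.pi μ := by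
        simp only [mulVec, dotProduct, Finset.mul_sum, mul_left_comm]
    _ = ∑ k, M j k * if i = k then ∫ x, x ^ 2 ∂μ i else 0 := by
        rw [integral_finsetSum _ fun k _ => int_mul k]
        simp_rw [integral_const_mul, integral_eval_mul_eval_pi h_mean]
    _ = M j i * ∫ x, x ^ 2 ∂μ i := by simp

end SecondMoments

/-- A matrix supported strictly below the diagonal. For the coefficient matrix of a network this
expresses that the parents of every node precede it. -/
def StrictlyLowerTriangular {m R : Type*} [LE m] [Zero R] (B : Matrix m m R) : Prop :=
  ∀ ⦃i j⦄, i ≤ j → B i j = 0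

namespace StrictlyLowerTriangular

variable {m R : Type*} [LinearOrder m] [CommRing R] {B : Matrix m m R}

lemma isLowerTriangular_one_sub (hB : StrictlyLowerTriangular B) :
    (1 - B).IsLowerTriangular := fun i j (hij : i < j) => by
  rw [Matrix.sub_apply, one_apply_ne hij.ne, hB hij.le, sub_zero]

variable [Fintype m]

lemma det_one_sub (hB : StrictlyLowerTriangular B) : (1 - B).det = 1 := by
  rw [det_of_isLowerTriangular _ hB.isLowerTriangular_one_sub]
  exact Finset.prod_eq_one fun i _ => by rw [Matrix.sub_apply, one_apply_eq, hB le_rfl, sub_zero]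

lemma isUnit_det_one_sub (hB : StrictlyLowerTriangular B) : IsUnit (1 - B).det :=
  hB.det_one_sub ▸ isUnit_one

lemma inv_one_sub_apply_eq_zero (hB : StrictlyLowerTriangular B) {i j : m} (hij : i < j) :
    (1 - B)⁻¹ i j = 0 := by
  have : Invertible (1 - B) := invertibleOfIsUnitDet _ hB.isUnit_det_one_sub
  exact blockTriangular_inv_of_blockTriangular hB.isLowerTriangular_one_sub hij

end StrictlyLowerTriangular

lemma sub_mulVec_apply_eq_sub_sum {m n R : Type*} [Fintype n] [NonUnitalNonAssocRing R]
    (A B C : Matrix m n R) {i : m} {s : Finset n} (h_eq : ∀ j ∉ s, C i j = B i j) (x : n → R) :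
    ((A - C) *ᵥ x) i = ((A - B) *ᵥ x) i - ∑ j ∈ s, (C i j - B i j) * x j := by
  have sum_eq : ∑ j ∈ s, (C i j - B i j) * x j = ((C - B) *ᵥ x) i :=
    Finset.sum_subset (Finset.subset_univ s) fun j _ hj => by rw [h_eq j hj, sub_self, zero_mul]
  rw [sum_eq, ← Pi.sub_apply, ← sub_mulVec, sub_sub_sub_cancel_right]

section GaussianBN

variable {n : ℕ} {B Bhat : Matrix (Fin n) (Fin n) ℝ} {σ σhat : Fin n → ℝ}

/-- The Lebesgue density of `gaussianBN B σ` for strictly lower triangular `B`: the product over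
the nodes of the centred Gaussian densities of the residuals `((1 - B) x)ᵢ`. -/
noncomputable def gaussianBNPDF (B : Matrix (Fin n) (Fin n) ℝ) (σ : Fin n → ℝ)
    (x : Fin n → ℝ) : ℝ :=
  ∏ i, gaussianPDFReal 0 (σ i ^ 2).toNNReal (((1 - B) *ᵥ x) i)

lemma measurable_gaussianBNPDF (B : Matrix (Fin n) (Fin n) ℝ) (σ : Fin n → ℝ) :
    Measurable (gaussianBNPDF B σ) :=
  Finset.measurable_prod _ fun i _ => (measurable_gaussianPDFReal _ _).comp <|
    (measurable_pi_apply i).comp (by fun_prop : Measurable fun x => (1 - B) *ᵥ x)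

lemma gaussianBNPDF_pos (B : Matrix (Fin n) (Fin n) ℝ) (hσ : ∀ i, σ i ≠ 0) (x : Fin n → ℝ) :
    0 < gaussianBNPDF B σ x :=
  Finset.prod_pos fun i _ => gaussianPDFReal_pos _ _ _ (by simpa using hσ i)

lemma gaussianBN_eq_withDensity (hB : StrictlyLowerTriangular B) (hσ : ∀ i, σ i ≠ 0) :
    gaussianBN B σ = volume.withDensity fun x => ENNReal.ofReal (gaussianBNPDF B σ x) := by
  have hT : Measurable fun η : Fin n → ℝ => (1 - B)⁻¹ *ᵥ η := by fun_prop
  have hdet : (1 - B)⁻¹.det = 1 := by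
    rw [det_nonsing_inv, hB.det_one_sub, Ring.inverse_one]
  have volume_preserved :
      (volume : Measure (Fin n → ℝ)).map (fun η => (1 - B)⁻¹ *ᵥ η) = volume := by
    have h_map := Real.map_matrix_volume_pi_eq_smul_volume_pi (hdet ▸ one_ne_zero)
    rwa [hdet, inv_one, abs_one, ENNReal.ofReal_one, one_smul] at h_map
  have density_comp : (fun η : Fin n → ℝ =>
        ENNReal.ofReal (∏ i, gaussianPDFReal 0 (σ i ^ 2).toNNReal (η i)))
      = (fun x => ENNReal.ofReal (gaussianBNPDF B σ x)) ∘ fun η => (1 - B)⁻¹ *ᵥ η := by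
    ext η
    simp only [Function.comp_apply, gaussianBNPDF, mulVec_mulVec,
      mul_nonsing_inv _ hB.isUnit_det_one_sub, one_mulVec]
  rw [gaussianBN, pi_gaussianReal_eq_withDensity (fun _ => 0) (fun i => by simpa using hσ i),
    density_comp, map_withDensity_comp _ hT (measurable_gaussianBNPDF B σ).ennreal_ofReal,
    volume_preserved]

lemma log_gaussianBNPDF_sub_log_gaussianBNPDF (B Bhat : Matrix (Fin n) (Fin n) ℝ)
    (hσ : ∀ i, σ i ≠ 0) (hσhat : ∀ i, σhat i ≠ 0) (x : Fin n → ℝ) :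
    Real.log (gaussianBNPDF B σ x) - Real.log (gaussianBNPDF Bhat σhat x)
      = ∑ i, (Real.log (σhat i / σ i) + ((1 - Bhat) *ᵥ x) i ^ 2 / (2 * σhat i ^ 2)
          - ((1 - B) *ᵥ x) i ^ 2 / (2 * σ i ^ 2)) := by
  simp_rw [← log_gaussianPDFReal_sub_log_gaussianPDFReal (hσ _) (hσhat _)]
  rw [Finset.sum_sub_distrib, gaussianBNPDF, gaussianBNPDF,
    Real.log_prod fun i _ => (gaussianPDFReal_pos _ _ _ (by simpa using hσ i)).ne',
    Real.log_prod fun i _ => (gaussianPDFReal_pos _ _ _ (by simpa using hσhat i)).ne']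

instance isProbabilityMeasure_gaussianBN (B : Matrix (Fin n) (Fin n) ℝ) (σ : Fin n → ℝ) :
    IsProbabilityMeasure (gaussianBN B σ) :=
  Measure.isProbabilityMeasure_map (by fun_prop)

lemma memLp_eval_gaussianBN (B : Matrix (Fin n) (Fin n) ℝ) (σ : Fin n → ℝ) (j : Fin n) :
    MemLp (fun x => x j) 2 (gaussianBN B σ) := by
  refine (memLp_map_measure_iff (measurable_pi_apply j).aestronglyMeasurable (by fun_prop)).2 ?_
  have memLp_noise : ∀ k, MemLp (fun η : Fin n → ℝ => η k) 2
      (Measure.pi fun i => gaussianReal 0 (σ i ^ 2).toNNReal) :=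
    fun k => memLp_eval_pi (memLp_id_gaussianReal' 2 ENNReal.ofNat_ne_top)
  exact memLp_mulVec_apply memLp_noise _ j

lemma memLp_mulVec_gaussianBN {κ : Type*} (M : Matrix κ (Fin n) ℝ) (i : κ) :
    MemLp (fun x => (M *ᵥ x) i) 2 (gaussianBN B σ) :=
  memLp_mulVec_apply (memLp_eval_gaussianBN B σ) M i

lemma integral_residual_mul_mulVec_gaussianBN {κ : Type*} (hB : IsUnit (1 - B).det)
    (M : Matrix κ (Fin n) ℝ) (i : Fin n) (j : κ) :
    ∫ x, ((1 - B) *ᵥ x) i * (M *ᵥ x) j ∂gaussianBN B σ = (M * (1 - B)⁻¹) j i * σ i ^ 2 := by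
  have h_meas : Measurable fun x : Fin n → ℝ => ((1 - B) *ᵥ x) i * (M *ᵥ x) j := by
    simp only [mulVec, dotProduct]
    fun_prop
  rw [gaussianBN, integral_map (by fun_prop) h_meas.aestronglyMeasurable]
  simp_rw [mulVec_mulVec, mul_nonsing_inv _ hB, one_mulVec]
  rw [integral_eval_mul_mulVec_pi (fun _ => integral_id_gaussianReal)
      (fun _ => memLp_id_gaussianReal' 2 ENNReal.ofNat_ne_top),
    integral_sq_gaussianReal_zero, Real.coe_toNNReal _ (sq_nonneg _)]

lemma integral_residual_sq_gaussianBN (hB : IsUnit (1 - B).det) (i : Fin n) :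
    ∫ x, ((1 - B) *ᵥ x) i ^ 2 ∂gaussianBN B σ = σ i ^ 2 := by
  simp_rw [sq (((1 - B) *ᵥ _) i)]
  rw [integral_residual_mul_mulVec_gaussianBN hB, mul_nonsing_inv _ hB, one_apply_eq, one_mul]

lemma integral_residual_mul_eval_gaussianBN_eq_zero (hB : StrictlyLowerTriangular B)
    {i j : Fin n} (hji : j < i) :
    ∫ x, ((1 - B) *ᵥ x) i * x j ∂gaussianBN B σ = 0 := by
  simpa [hB.inv_one_sub_apply_eq_zero hji] using
    integral_residual_mul_mulVec_gaussianBN (σ := σ) hB.isUnit_det_one_sub 1 i j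

lemma integral_one_sub_mulVec_sq_gaussianBN (hB : StrictlyLowerTriangular B) {i : Fin n}
    {s : Finset (Fin n)} (hs : ∀ j ∈ s, j < i) (h_eq : ∀ j ∉ s, Bhat i j = B i j) :
    ∫ x, ((1 - Bhat) *ᵥ x) i ^ 2 ∂gaussianBN B σ
      = σ i ^ 2 + ∑ j ∈ s, ∑ k ∈ s,
          (Bhat i j - B i j) * (∫ x, x j * x k ∂gaussianBN B σ) * (Bhat i k - B i k) := by
  simp_rw [sub_mulVec_apply_eq_sub_sum 1 B Bhat h_eq]
  rw [integral_sub_sum_mul_sq (memLp_mulVec_gaussianBN _ i)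
      (fun j _ => memLp_eval_gaussianBN B σ j)
      (fun j hj => integral_residual_mul_eval_gaussianBN_eq_zero hB (hs j hj)),
    integral_residual_sq_gaussianBN hB.isUnit_det_one_sub]

lemma klDiv_gaussianBN_eq_integral_log (hB : StrictlyLowerTriangular B)
    (hBhat : StrictlyLowerTriangular Bhat) (hσ : ∀ i, σ i ≠ 0) (hσhat : ∀ i, σhat i ≠ 0) :
    klDiv (gaussianBN B σ) (gaussianBN Bhat σhat)
      = ∫ x, (Real.log (gaussianBNPDF B σ x) - Real.log (gaussianBNPDF Bhat σhat x))
          ∂gaussianBN B σ := by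
  rw [gaussianBN_eq_withDensity hB hσ, gaussianBN_eq_withDensity hBhat hσhat]
  exact klDiv_withDensity_ofReal _ (measurable_gaussianBNPDF _ _)
    (measurable_gaussianBNPDF _ _) (gaussianBNPDF_pos Bhat hσhat)

lemma klDiv_gaussianBN_eq_sum_integral (hB : StrictlyLowerTriangular B)
    (hBhat : StrictlyLowerTriangular Bhat) (hσ : ∀ i, σ i ≠ 0) (hσhat : ∀ i, σhat i ≠ 0) :
    klDiv (gaussianBN B σ) (gaussianBN Bhat σhat)
      = ∑ i, (Real.log (σhat i / σ i)
          + (∫ x, ((1 - Bhat) *ᵥ x) i ^ 2 ∂gaussianBN B σ) / (2 * σhat i ^ 2) - 1 / 2) := by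
  have int_sq : ∀ (C : Matrix (Fin n) (Fin n) ℝ) (τ : ℝ) (i : Fin n),
      Integrable (fun x => ((1 - C) *ᵥ x) i ^ 2 / (2 * τ ^ 2)) (gaussianBN B σ) :=
    fun C τ i => (memLp_mulVec_gaussianBN _ i).integrable_sq.div_const _
  simp_rw [klDiv_gaussianBN_eq_integral_log hB hBhat hσ hσhat,
    log_gaussianBNPDF_sub_log_gaussianBNPDF B Bhat hσ hσhat]
  have int_add : ∀ i, Integrable (fun x => Real.log (σhat i / σ i)
      + ((1 - Bhat) *ᵥ x) i ^ 2 / (2 * σhat i ^ 2)) (gaussianBN B σ) :=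
    fun i => (integrable_const _).add (int_sq Bhat (σhat i) i)
  refine (integral_finsetSum _ fun i _ => (int_add i).sub (int_sq B (σ i) i)).trans
    (Finset.sum_congr rfl fun i _ => ?_)
  rw [integral_sub' (int_add i) (int_sq B (σ i) i),
    integral_add (integrable_const _) (int_sq Bhat (σhat i) i), integral_const, probReal_univ,
    one_smul, integral_div, integral_div, integral_residual_sq_gaussianBN hB.isUnit_det_one_sub]
  have := hσ i
  field_simp

end GaussianBN

/-- Decomposition of the KL divergence between two Gaussian Bayesian networks on a
common DAG `G` (with parent sets `π i ⊆ {0,…,i−1}`):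
`KL(P‖Q) = Σᵢ [ ln(σ̂ᵢ/σᵢ) + (σᵢ² − σ̂ᵢ²)/(2σ̂ᵢ²) + ΔᵢᵀMᵢΔᵢ/(2σ̂ᵢ²) ]`,
where `Mᵢ` is the covariance matrix of the parents of node `i` under `P`
and `Δᵢ = Âᵢ − Aᵢ`. -/
theorem stmt_2 (n : ℕ) (π : Fin n → Finset (Fin n))
    (hdag : ∀ i, ∀ j ∈ π i, j < i)
    (B Bhat : Matrix (Fin n) (Fin n) ℝ)
    (hB : ∀ i j, j ∉ π i → B i j = 0) (hBhat : ∀ i j, j ∉ π i → Bhat i j = 0)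
    (σ σhat : Fin n → ℝ) (hσ : ∀ i, 0 < σ i) (hσhat : ∀ i, 0 < σhat i) :
    klDiv (gaussianBN B σ) (gaussianBN Bhat σhat)
      = ∑ i, (Real.log (σhat i / σ i)
          + (σ i ^ 2 - σhat i ^ 2) / (2 * σhat i ^ 2)
          + (∑ j ∈ π i, ∑ k ∈ π i,
              (Bhat i j - B i j) * (∫ x, x j * x k ∂(gaussianBN B σ))
                * (Bhat i k - B i k)) / (2 * σhat i ^ 2)) := by
  have strictlyLowerTriangular_of_support : ∀ C : Matrix (Fin n) (Fin n) ℝ,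
      (∀ i j, j ∉ π i → C i j = 0) → StrictlyLowerTriangular C :=
    fun C hC i j hij => hC i j fun hj => (hdag i j hj).not_ge hij
  have hB_strict := strictlyLowerTriangular_of_support B hB
  have hBhat_strict := strictlyLowerTriangular_of_support Bhat hBhat
  rw [klDiv_gaussianBN_eq_sum_integral hB_strict hBhat_strict
    (fun i => (hσ i).ne') (fun i => (hσhat i).ne')]
  refine Finset.sum_congr rfl fun i _ => ?_
  rw [integral_one_sub_mulVec_sq_gaussianBN hB_strict (hdag i)
    fun j hj => (hBhat i j hj).trans (hB i j hj).symm]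
  have := (hσhat i).ne'
  field_simp
  ring
end

section
/- Let G ∈ ℝ^{k×d} be a random matrix with i.i.d. standard Gaussian N(0,1) entries. Then for any constant 0 < c₁ < 1/2 and any k ≥ d/c₁², with probability at least 1 − exp(−k·c₁²/2), the matrix GᵀG is invertible and its inverse has operator norm ‖(GᵀG)⁻¹‖_op ≤ 1/((1 − 2c₁)²·k). -/
open MeasureTheory ProbabilityTheory Matrix

/-- The operator (spectral) norm of a real matrix, i.e. the operator norm of the induced
linear map between Euclidean spaces. -/
noncomputable def matOpNorm {m n : ℕ} (M : Matrix (Fin m) (Fin n) ℝ) : ℝ :=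
  ‖LinearMap.toContinuousLinearMap (Matrix.toEuclideanLin M)‖

open scoped NNReal ENNReal

/-!
The quadratic form of `GᵀG` is bounded below on all unit vectors at once by a PAC-Bayesian argument.
Average the exponential of a tilted version of `-L |G w|² / 2` over a Gaussian prior
`w ∼ N(0, τ I)`. The tilt makes the mean of this average over the random matrix `G` explicit, so
Markov's inequality bounds it from above with high probability. The Gibbs variational principle with
posterior `N(v, σ I)` bounds it from below for every unit vector `v` simultaneously, the price being
a relative entropy of order `d`. A unit vector with small `|G v|²` would make this lower bound
exceed the upper one.
-/

section ProductMeasures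

variable {ι : Type*} [Fintype ι] {Ω : ι → Type*} [∀ i, MeasurableSpace (Ω i)]
  {μ : ∀ i, Measure (Ω i)} [∀ i, IsProbabilityMeasure (μ i)]

lemma lintegral_pi_prod_eq_prod_lintegral {f : ∀ i, Ω i → ℝ≥0∞}
    (hf : ∀ i, Measurable (f i)) :
    ∫⁻ x, ∏ i, f i (x i) ∂Measure.pi μ = ∏ i, ∫⁻ x, f i x ∂μ i := by
  rw [lintegral_prod_eq_prod_lintegral_of_indepFun Finset.univ
    (fun i (x : ∀ i, Ω i) ↦ f i (x i)) (iIndepFun_pi fun i ↦ (hf i).aemeasurable)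
    fun i ↦ (hf i).comp (measurable_pi_apply i)]
  exact Finset.prod_congr rfl fun i _ ↦ (measurePreserving_eval μ i).lintegral_comp (hf i)

lemma pi_withDensity_eq_withDensity_prod {f : ∀ i, Ω i → ℝ≥0∞}
    [∀ i, SigmaFinite ((μ i).withDensity (f i))] (hf : ∀ i, Measurable (f i)) :
    Measure.pi (fun i ↦ (μ i).withDensity (f i)) =
      (Measure.pi μ).withDensity fun x ↦ ∏ i, f i (x i) := by
  refine Measure.pi_eq fun s hs ↦ ?_
  have indicator_prod (x : ∀ i, Ω i) :
      (Set.univ.pi s).indicator (fun x ↦ ∏ i, f i (x i)) x =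
        ∏ i, (s i).indicator (f i) (x i) := by
    by_cases hx : x ∈ Set.univ.pi s
    · rw [Set.indicator_of_mem hx]
      exact Finset.prod_congr rfl fun i _ ↦ (Set.indicator_of_mem (hx i trivial) _).symm
    · obtain ⟨i, hi⟩ : ∃ i, x i ∉ s i := by simpa using hx
      rw [Set.indicator_of_notMem hx,
        Finset.prod_eq_zero (Finset.mem_univ i) (Set.indicator_of_notMem hi _)]
  rw [withDensity_apply _ (.univ_pi hs), ← lintegral_indicator (.univ_pi hs)]
  simp_rw [indicator_prod]
  rw [lintegral_pi_prod_eq_prod_lintegral fun i ↦ (hf i).indicator (hs i)]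
  simp_rw [withDensity_apply _ (hs _), lintegral_indicator (hs _)]

lemma integral_pi_sum_eq_sum_integral {X : ∀ i, Ω i → ℝ} (hX : ∀ i, Integrable (X i) (μ i)) :
    ∫ x, ∑ i, X i (x i) ∂Measure.pi μ = ∑ i, ∫ x, X i x ∂μ i := by
  rw [integral_finsetSum _ fun i _ ↦ integrable_comp_eval (hX i)]
  exact Finset.sum_congr rfl fun i _ ↦ integral_comp_eval (hX i).1

end ProductMeasures

lemma ofReal_exp_integral_le_lintegral {Ω : Type*} [MeasurableSpace Ω] {μ : Measure Ω}
    [IsProbabilityMeasure μ] {F : Ω → ℝ} (hF : Integrable F μ) :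
    ENNReal.ofReal (Real.exp (∫ x, F x ∂μ)) ≤ ∫⁻ x, ENNReal.ofReal (Real.exp (F x)) ∂μ := by
  by_cases hexp : Integrable (fun x ↦ Real.exp (F x)) μ
  · rw [← ofReal_integral_eq_lintegral_ofReal hexp (ae_of_all _ fun x ↦ (Real.exp_pos _).le)]
    exact ENNReal.ofReal_le_ofReal <| convexOn_exp.map_integral_le Real.continuous_exp.continuousOn
      isClosed_univ (ae_of_all _ fun _ ↦ trivial) hF hexp
  · have infinite : ∫⁻ x, ENNReal.ofReal (Real.exp (F x)) ∂μ = ∞ := by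
      by_contra hfin
      exact hexp <| (lintegral_ofReal_ne_top_iff_integrable
        (Real.continuous_exp.comp_aestronglyMeasurable hF.1)
        (ae_of_all _ fun x ↦ (Real.exp_pos _).le)).1 hfin
    simp [infinite]

lemma log_add_sub_sq_le_log {x y : ℝ} (hx : 0 < x) (hy : 1 ≤ y) :
    Real.log x + (y - x) / x - (y - x) ^ 2 / x ≤ Real.log y := by
  have hypos : 0 < y := by positivity
  have tangent : 1 - (y / x)⁻¹ ≤ Real.log y - Real.log x := by
    rw [← Real.log_div hypos.ne' hx.ne']
    exact Real.one_sub_inv_le_log_of_pos (by positivity)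
  have quadratic_error : (y - x) ^ 2 / (x * y) ≤ (y - x) ^ 2 / x := by
    gcongr
    exact le_mul_of_one_le_right hx.le hy
  have tangent_eq : 1 - (y / x)⁻¹ = (y - x) / x - (y - x) ^ 2 / (x * y) := by
    field_simp
    ring
  linarith

section LogMoments

variable {Ω : Type*} [MeasurableSpace Ω] {μ : Measure Ω} {X : Ω → ℝ}

lemma integrable_log_one_add (hX : Integrable X μ) (hX0 : 0 ≤ X) :
    Integrable (fun x ↦ Real.log (1 + X x)) μ := by
  refine hX.mono (Real.measurable_log.comp_aemeasurable
    (hX.aemeasurable.const_add 1)).aestronglyMeasurable (ae_of_all _ fun x ↦ ?_)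
  have hx : 0 ≤ X x := hX0 x
  rw [Real.norm_of_nonneg (Real.log_nonneg (by linarith)), Real.norm_of_nonneg hx]
  linarith [Real.log_le_sub_one_of_pos (by linarith : 0 < 1 + X x)]

lemma log_one_add_integral_sub_variance_le_integral_log [IsProbabilityMeasure μ]
    (hX : MemLp X 2 μ) (hX0 : 0 ≤ X) :
    Real.log (1 + ∫ x, X x ∂μ) - Var[X; μ] / (1 + ∫ x, X x ∂μ) ≤
      ∫ x, Real.log (1 + X x) ∂μ := by
  set e := ∫ x, X x ∂μ with he
  have he0 : 0 ≤ e := integral_nonneg hX0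
  have hint : Integrable X μ := hX.integrable one_le_two
  have hlin : Integrable (fun x ↦ Real.log (1 + e) + (X x - e) / (1 + e)) μ := by fun_prop
  have hsq : Integrable (fun x ↦ (X x - e) ^ 2 / (1 + e)) μ :=
    (hX.sub (memLp_const e)).integrable_sq.div_const _
  calc Real.log (1 + e) - Var[X; μ] / (1 + e)
      = ∫ x, Real.log (1 + e) + (X x - e) / (1 + e) - (X x - e) ^ 2 / (1 + e) ∂μ := by
        rw [integral_sub hlin hsq, integral_add (by fun_prop) (by fun_prop), integral_div,
          integral_div, integral_sub hint (by fun_prop), variance_eq_integral hX.aemeasurable]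
        simp [← he]
    _ ≤ ∫ x, Real.log (1 + X x) ∂μ := by
        refine integral_mono (hlin.sub hsq) (integrable_log_one_add hint hX0) fun x ↦ ?_
        have := log_add_sub_sq_le_log (by linarith : 0 < 1 + e)
          (by linarith [show 0 ≤ X x from hX0 x] : 1 ≤ 1 + X x)
        simpa only [add_sub_add_left_eq_sub] using this

end LogMoments

section RealGaussian

variable (m m' : ℝ) {v v' : ℝ≥0}

lemma gaussianReal_eq_withDensity_gaussianReal (hv : v ≠ 0) (hv' : v' ≠ 0) :
    gaussianReal m v = (gaussianReal m' v').withDensity fun x ↦ ENNReal.ofReal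
      (Real.exp (Real.log (v' / v) / 2 - (x - m) ^ 2 / (2 * v) + (x - m') ^ 2 / (2 * v'))) := by
  have pdf_eq (x : ℝ) : gaussianPDFReal m v x = gaussianPDFReal m' v' x *
      Real.exp (Real.log (v' / v) / 2 - (x - m) ^ 2 / (2 * v) + (x - m') ^ 2 / (2 * v')) := by
    have prefactor : Real.exp (Real.log (v' / v) / 2) = √v' / √v := by
      rw [← Real.log_sqrt (by positivity), Real.exp_log (by positivity),
        Real.sqrt_div (by positivity)]
    rw [sub_add_eq_add_sub, add_sub_assoc, Real.exp_add, prefactor, gaussianPDFReal,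
      gaussianPDFReal, Real.sqrt_mul (by positivity), Real.sqrt_mul (by positivity) (v' : ℝ),
      Real.exp_sub, neg_div, neg_div, Real.exp_neg, Real.exp_neg]
    field_simp
  rw [gaussianReal_of_var_ne_zero _ hv, gaussianReal_of_var_ne_zero _ hv',
    ← withDensity_mul _ (measurable_gaussianPDF _ _) (by fun_prop)]
  congr with x
  rw [Pi.mul_apply, gaussianPDF, gaussianPDF, pdf_eq,
    ENNReal.ofReal_mul (gaussianPDFReal_nonneg _ _ _)]

lemma lintegral_exp_neg_mul_sq_gaussianReal (v : ℝ≥0) {l : ℝ} (hl : 0 ≤ l) :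
    ∫⁻ x, ENNReal.ofReal (Real.exp (-l / 2 * x ^ 2)) ∂gaussianReal 0 v =
      ENNReal.ofReal (Real.exp (-Real.log (1 + l * v) / 2)) := by
  obtain rfl | hv := eq_or_ne v 0
  · simp
  have hvpos : (0 : ℝ) < v := by positivity
  obtain ⟨u, hu⟩ : ∃ u : ℝ≥0, (u : ℝ) = v / (1 + l * v) := ⟨⟨_, by positivity⟩, rfl⟩
  have hu0 : u ≠ 0 := by
    rw [← NNReal.coe_ne_zero, hu]
    positivity
  have total_mass := measure_univ (μ := gaussianReal 0 u)
  rw [gaussianReal_eq_withDensity_gaussianReal 0 0 hu0 hv, withDensity_apply _ .univ,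
    setLIntegral_univ] at total_mass
  have density_eq (x : ℝ) : ENNReal.ofReal (Real.exp (-l / 2 * x ^ 2)) =
      ENNReal.ofReal (Real.exp (-Real.log (1 + l * v) / 2)) * ENNReal.ofReal (Real.exp
        (Real.log (v / u) / 2 - (x - 0) ^ 2 / (2 * u) + (x - 0) ^ 2 / (2 * v))) := by
    rw [← ENNReal.ofReal_mul (Real.exp_pos _).le, ← Real.exp_add, hu, div_div_cancel₀ hvpos.ne']
    congr 2
    field_simp
    ring
  simp_rw [density_eq]
  rw [lintegral_const_mul _ (by fun_prop), total_mass, mul_one]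

lemma integrable_pow_gaussianReal (v : ℝ≥0) (n : ℕ) :
    Integrable (fun x ↦ x ^ n) (gaussianReal m v) := by
  have := (memLp_id_gaussianReal (μ := m) (v := v) n).integrable_norm_pow'
  refine (integrable_norm_iff (by fun_prop)).1 ?_
  simpa using this

lemma integrable_pow_mul_gaussianPDFReal (hv : v ≠ 0) (n : ℕ) :
    Integrable fun x ↦ x ^ n * gaussianPDFReal m v x := by
  have := integrable_pow_gaussianReal m v n
  rw [gaussianReal_of_var_ne_zero _ hv, integrable_withDensity_iff_integrable_smul'
    (measurable_gaussianPDF _ _) (ae_of_all _ fun _ ↦ gaussianPDF_lt_top)] at this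
  simpa only [toReal_gaussianPDF, smul_eq_mul, mul_comm] using this

lemma hasDerivAt_gaussianPDFReal (v : ℝ≥0) (x : ℝ) :
    HasDerivAt (gaussianPDFReal m v) (-((x - m) / v) * gaussianPDFReal m v x) x := by
  have exponent : HasDerivAt (fun x ↦ -(x - m) ^ 2 / (2 * v)) (-((x - m) / v)) x := by
    refine ((((hasDerivAt_id x).sub_const m).pow 2).neg.div_const (2 * (v : ℝ))).congr_deriv ?_
    simp only [id_eq, mul_one, Nat.cast_ofNat, Nat.add_one_sub_one, pow_one, ← mul_neg,
      mul_div_mul_left _ _ (two_ne_zero' ℝ), neg_div]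
  exact (exponent.exp.const_mul _).congr_deriv (by rw [gaussianPDFReal]; ring)

lemma integral_pow_add_two_gaussianReal (v : ℝ≥0) (n : ℕ) :
    ∫ x, x ^ (n + 2) ∂gaussianReal m v =
      m * ∫ x, x ^ (n + 1) ∂gaussianReal m v + (n + 1) * v * ∫ x, x ^ n ∂gaussianReal m v := by
  obtain rfl | hv := eq_or_ne v 0
  · simp [pow_succ']
  have hv_real : (v : ℝ) ≠ 0 := by exact_mod_cast hv
  have hint := integrable_pow_mul_gaussianPDFReal m hv
  have expand (x : ℝ) : x ^ (n + 1) * (-((x - m) / v) * gaussianPDFReal m v x) =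
      -(1 / v) * (x ^ (n + 2) * gaussianPDFReal m v x) +
        m / v * (x ^ (n + 1) * gaussianPDFReal m v x) := by ring
  have by_parts : ∫ x, x ^ (n + 1) * (-((x - m) / v) * gaussianPDFReal m v x) =
      -∫ x, (n + 1) * x ^ n * gaussianPDFReal m v x := by
    refine integral_mul_deriv_eq_deriv_mul_of_integrable
      (fun x _ ↦ by simpa using hasDerivAt_pow (n + 1) x)
      (fun x _ ↦ hasDerivAt_gaussianPDFReal m v x) ?_ ?_ (hint (n + 1))
    · exact (((hint (n + 2)).const_mul _).add ((hint (n + 1)).const_mul _)).congr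
        (ae_of_all _ fun x ↦ (expand x).symm)
    · simpa only [Pi.mul_def, mul_assoc] using (hint n).const_mul (n + 1 : ℝ)
  simp_rw [expand, mul_assoc] at by_parts
  rw [integral_add ((hint _).const_mul _) ((hint _).const_mul _), integral_const_mul,
    integral_const_mul, integral_const_mul] at by_parts
  simp_rw [integral_gaussianReal_eq_integral_smul hv, smul_eq_mul, mul_comm (gaussianPDFReal m v _)]
  field_simp at by_parts
  linarith

lemma integral_sq_gaussianReal (v : ℝ≥0) : ∫ x, x ^ 2 ∂gaussianReal m v = m ^ 2 + v := by
  simpa [sq] using integral_pow_add_two_gaussianReal m v 0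

lemma integral_pow_four_gaussianReal (v : ℝ≥0) :
    ∫ x, x ^ 4 ∂gaussianReal m v = m ^ 4 + 6 * m ^ 2 * v + 3 * v ^ 2 := by
  rw [integral_pow_add_two_gaussianReal m v 2, integral_pow_add_two_gaussianReal m v 1,
    integral_sq_gaussianReal]
  simp only [pow_one, integral_id_gaussianReal]
  push_cast
  ring

lemma memLp_two_sq_gaussianReal (v : ℝ≥0) : MemLp (fun x ↦ x ^ 2) 2 (gaussianReal m v) := by
  rw [memLp_two_iff_integrable_sq (by fun_prop)]
  simpa only [← pow_mul] using integrable_pow_gaussianReal m v 4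

lemma variance_sq_gaussianReal (v : ℝ≥0) :
    Var[fun x ↦ x ^ 2; gaussianReal m v] = 2 * v ^ 2 + 4 * v * m ^ 2 := by
  rw [variance_eq_sub (memLp_two_sq_gaussianReal m v)]
  simp only [Pi.pow_apply, ← pow_mul, Nat.reduceMul, integral_pow_four_gaussianReal,
    integral_sq_gaussianReal]
  ring

end RealGaussian

section DotProduct

variable {κ : Type*} [Fintype κ]

@[fun_prop]
lemma measurable_dotProduct {Ω : Type*} [MeasurableSpace Ω] {f g : Ω → κ → ℝ}
    (hf : Measurable f) (hg : Measurable g) : Measurable fun x ↦ f x ⬝ᵥ g x := by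
  simp only [dotProduct]
  fun_prop

lemma dotProduct_self_nonneg (w : κ → ℝ) : 0 ≤ w ⬝ᵥ w := by
  simpa using dotProduct_star_self_nonneg w

lemma sub_dotProduct_sub_self (w m : κ → ℝ) :
    (w - m) ⬝ᵥ (w - m) = w ⬝ᵥ w - 2 * (m ⬝ᵥ w) + m ⬝ᵥ m := by
  rw [sub_dotProduct, dotProduct_sub, dotProduct_sub, dotProduct_comm w m]
  ring

end DotProduct

section GaussianVector

variable {κ : Type*} [Fintype κ]

/-- The isotropic Gaussian measure `N(m, v I)`, encoded as a product of one-dimensional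
Gaussians. -/
noncomputable abbrev gaussianPi (m : κ → ℝ) (v : ℝ≥0) : Measure (κ → ℝ) :=
  Measure.pi fun i ↦ gaussianReal (m i) v

variable (m m' a : κ → ℝ) (v : ℝ≥0)

lemma memLp_const_mul_gaussianReal (c m : ℝ) :
    MemLp (fun x ↦ c * x) 2 (gaussianReal m v) :=
  (memLp_id_gaussianReal 2).const_mul c

lemma memLp_dotProduct_gaussianPi : MemLp (fun w ↦ a ⬝ᵥ w) 2 (gaussianPi m v) :=
  memLp_finsetSum _ fun i _ ↦ (memLp_const_mul_gaussianReal v (a i) (m i)).comp_measurePreserving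
    (measurePreserving_eval _ i)

lemma integrable_dotProduct_gaussianPi : Integrable (fun w ↦ a ⬝ᵥ w) (gaussianPi m v) :=
  (memLp_dotProduct_gaussianPi m a v).integrable one_le_two

lemma integral_dotProduct_gaussianPi : ∫ w, a ⬝ᵥ w ∂gaussianPi m v = a ⬝ᵥ m := by
  refine (integral_pi_sum_eq_sum_integral fun i ↦
    (memLp_const_mul_gaussianReal v (a i) (m i)).integrable one_le_two).trans ?_
  exact Finset.sum_congr rfl fun i _ ↦ by rw [integral_const_mul, integral_id_gaussianReal]

lemma variance_dotProduct_gaussianPi : Var[fun w ↦ a ⬝ᵥ w; gaussianPi m v] = v * (a ⬝ᵥ a) := by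
  have := variance_sum_pi fun i ↦ memLp_const_mul_gaussianReal v (a i) (m i)
  convert this using 1
  · congr 1
    ext w
    simp [dotProduct]
  · rw [dotProduct, Finset.mul_sum]
    refine Finset.sum_congr rfl fun i _ ↦ ?_
    rw [variance_const_mul, variance_fun_id_gaussianReal]
    ring

lemma integral_dotProduct_sq_gaussianPi :
    ∫ w, (a ⬝ᵥ w) ^ 2 ∂gaussianPi m v = (a ⬝ᵥ m) ^ 2 + v * (a ⬝ᵥ a) := by
  rw [← variance_dotProduct_gaussianPi m, ← integral_dotProduct_gaussianPi m a v,
    variance_eq_sub (memLp_dotProduct_gaussianPi m a v)]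
  simp

lemma map_dotProduct_gaussianPi :
    (gaussianPi m v).map (fun w ↦ a ⬝ᵥ w) = gaussianReal (a ⬝ᵥ m) (v * (a ⬝ᵥ a).toNNReal) := by
  have gaussian : HasGaussianLaw (fun w ↦ a ⬝ᵥ w) (gaussianPi m v) := by
    refine iIndepFun.hasGaussianLaw_fun_sum (X := fun i (w : κ → ℝ) ↦ a i * w i) (fun i ↦ ?_)
      (iIndepFun_pi fun i ↦ by fun_prop)
    have : HasGaussianLaw (fun w : κ → ℝ ↦ w i) (gaussianPi m v) :=
      ⟨by rw [(measurePreserving_eval _ i).map_eq]; infer_instance⟩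
    exact this.fun_smul (a i)
  rw [gaussian.map_eq_gaussianReal, integral_dotProduct_gaussianPi, variance_dotProduct_gaussianPi,
    Real.toNNReal_mul v.coe_nonneg, Real.toNNReal_coe]

lemma memLp_dotProduct_self_gaussianPi : MemLp (fun w ↦ w ⬝ᵥ w) 2 (gaussianPi m v) := by
  simp only [dotProduct, ← sq]
  exact memLp_finsetSum _ fun i _ ↦ (memLp_two_sq_gaussianReal (m i) v).comp_measurePreserving
    (measurePreserving_eval _ i)

lemma integrable_dotProduct_self_gaussianPi : Integrable (fun w ↦ w ⬝ᵥ w) (gaussianPi m v) :=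
  (memLp_dotProduct_self_gaussianPi m v).integrable one_le_two

lemma integral_dotProduct_self_gaussianPi :
    ∫ w, w ⬝ᵥ w ∂gaussianPi m v = m ⬝ᵥ m + Fintype.card κ * v := by
  simp only [dotProduct, ← sq]
  rw [integral_pi_sum_eq_sum_integral fun i ↦ integrable_pow_gaussianReal (m i) v 2]
  simp [integral_sq_gaussianReal, Finset.sum_add_distrib]

lemma variance_dotProduct_self_gaussianPi :
    Var[fun w ↦ w ⬝ᵥ w; gaussianPi m v] =
      2 * Fintype.card κ * v ^ 2 + 4 * v * (m ⬝ᵥ m) := by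
  have := variance_sum_pi fun i ↦ memLp_two_sq_gaussianReal (m i) v
  simp only [variance_sq_gaussianReal] at this
  convert this using 1
  · congr 1
    ext w
    simp [dotProduct, sq]
  · simp only [sq, dotProduct, Finset.mul_sum, Finset.sum_add_distrib, Finset.sum_const,
      Finset.card_univ, nsmul_eq_mul, add_left_inj]
    ring

lemma integrable_sub_dotProduct_sub_gaussianPi :
    Integrable (fun w ↦ (w - m) ⬝ᵥ (w - m)) (gaussianPi m v) := by
  simp_rw [sub_dotProduct_sub_self]
  exact ((integrable_dotProduct_self_gaussianPi m v).sub
    ((integrable_dotProduct_gaussianPi m m v).const_mul 2)).add (integrable_const _)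

lemma integral_sub_dotProduct_sub_gaussianPi :
    ∫ w, (w - m) ⬝ᵥ (w - m) ∂gaussianPi m v = Fintype.card κ * v := by
  have hself := integrable_dotProduct_self_gaussianPi m v
  have hdot := integrable_dotProduct_gaussianPi m m v
  simp_rw [sub_dotProduct_sub_self]
  rw [integral_add (by fun_prop) (integrable_const _), integral_sub hself (by fun_prop),
    integral_const_mul, integral_dotProduct_self_gaussianPi, integral_dotProduct_gaussianPi,
    integral_const, probReal_univ, one_smul]
  ring

variable {v} {v' : ℝ≥0}

lemma gaussianPi_eq_withDensity_gaussianPi (hv : v ≠ 0) (hv' : v' ≠ 0) :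
    gaussianPi m v = (gaussianPi m' v').withDensity fun x ↦ ENNReal.ofReal (Real.exp
      (Fintype.card κ * Real.log (v' / v) / 2 - (x - m) ⬝ᵥ (x - m) / (2 * v)
        + (x - m') ⬝ᵥ (x - m') / (2 * v'))) := by
  let density (i : κ) (x : ℝ) : ℝ≥0∞ := ENNReal.ofReal (Real.exp
    (Real.log (v' / v) / 2 - (x - m i) ^ 2 / (2 * v) + (x - m' i) ^ 2 / (2 * v')))
  have factor_eq (i : κ) :
      gaussianReal (m i) v = (gaussianReal (m' i) v').withDensity (density i) :=
    gaussianReal_eq_withDensity_gaussianReal (m i) (m' i) hv hv'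
  have (i : κ) : SigmaFinite ((gaussianReal (m' i) v').withDensity (density i)) := by
    rw [← factor_eq]
    infer_instance
  rw [gaussianPi, funext factor_eq, pi_withDensity_eq_withDensity_prod fun i ↦ by fun_prop]
  congr with x
  rw [← ENNReal.ofReal_prod_of_nonneg fun i _ ↦ (Real.exp_pos _).le, ← Real.exp_sum]
  simp only [Finset.sum_add_distrib, Finset.sum_sub_distrib, ← Finset.sum_div, dotProduct,
    Pi.sub_apply, ← sq, Finset.sum_const, Finset.card_univ, nsmul_eq_mul]

end GaussianVector

section GibbsVariationalPrinciple

variable {κ : Type*} [Fintype κ]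

/-- The Kullback–Leibler divergence of `N(m, v I)` from `N(0, τ I)`, in closed form; the price of
replacing the prior `N(0, τ I)` by the posterior `N(m, v I)` in the Gibbs variational principle. -/
noncomputable def gaussianKL (m : κ → ℝ) (v τ : ℝ≥0) : ℝ :=
  (Fintype.card κ * Real.log (τ / v) + (m ⬝ᵥ m + Fintype.card κ * v) / τ - Fintype.card κ) / 2

variable (m : κ → ℝ) {v τ : ℝ≥0}

lemma ofReal_exp_integral_sub_gaussianKL_le_lintegral_exp {F : (κ → ℝ) → ℝ} (hv : v ≠ 0)
    (hτ : τ ≠ 0) (hF : Integrable F (gaussianPi m v)) :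
    ENNReal.ofReal (Real.exp (∫ w, F w ∂gaussianPi m v - gaussianKL m v τ)) ≤
      ∫⁻ w, ENNReal.ofReal (Real.exp (F w)) ∂gaussianPi 0 τ := by
  have hv_real : (v : ℝ) ≠ 0 := by exact_mod_cast hv
  have hself := integrable_dotProduct_self_gaussianPi m v
  have hcentred := integrable_sub_dotProduct_sub_gaussianPi m v
  let logDensity (w : κ → ℝ) : ℝ :=
    Fintype.card κ * Real.log (v / τ) / 2 - w ⬝ᵥ w / (2 * τ) + (w - m) ⬝ᵥ (w - m) / (2 * v)
  have hlogDensity : Integrable logDensity (gaussianPi m v) :=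
    ((integrable_const _).sub (hself.div_const _)).add (hcentred.div_const _)
  have prior_eq : gaussianPi 0 τ = (gaussianPi m v).withDensity
      fun w ↦ ENNReal.ofReal (Real.exp (logDensity w)) := by
    simpa only [sub_zero] using gaussianPi_eq_withDensity_gaussianPi 0 m hτ hv
  have integral_logDensity : ∫ w, logDensity w ∂gaussianPi m v = -gaussianKL m v τ := by
    rw [integral_add (by fun_prop) (by fun_prop), integral_sub (by fun_prop) (by fun_prop),
      integral_div, integral_div, integral_div, integral_dotProduct_self_gaussianPi,
      integral_sub_dotProduct_sub_gaussianPi, integral_const, probReal_univ, one_smul,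
      ← inv_div (τ : ℝ), Real.log_inv, gaussianKL]
    field_simp
    ring
  have change_of_measure : ∫⁻ w, ENNReal.ofReal (Real.exp (F w)) ∂gaussianPi 0 τ =
      ∫⁻ w, ENNReal.ofReal (Real.exp (F w + logDensity w)) ∂gaussianPi m v := by
    rw [prior_eq, lintegral_withDensity_eq_lintegral_mul_non_measurable _ (by fun_prop)
      (ae_of_all _ fun _ ↦ ENNReal.ofReal_lt_top)]
    refine lintegral_congr fun w ↦ ?_
    rw [Pi.mul_apply, ← ENNReal.ofReal_mul (Real.exp_pos _).le, ← Real.exp_add, add_comm]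
  rw [change_of_measure, sub_eq_add_neg, ← integral_logDensity, ← integral_add hF hlogDensity]
  exact ofReal_exp_integral_le_lintegral (hF.add hlogDensity)

end GibbsVariationalPrinciple

section ExponentialMoments

variable {κ : Type*} [Fintype κ]

lemma lintegral_exp_neg_dotProduct_sq_gaussianPi (w : κ → ℝ) (v : ℝ≥0) {l : ℝ} (hl : 0 ≤ l) :
    ∫⁻ g, ENNReal.ofReal (Real.exp (-l / 2 * (w ⬝ᵥ g) ^ 2)) ∂gaussianPi 0 v =
      ENNReal.ofReal (Real.exp (-Real.log (1 + l * (v * (w ⬝ᵥ w))) / 2)) := by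
  rw [← lintegral_map (f := fun y ↦ ENNReal.ofReal (Real.exp (-l / 2 * y ^ 2)))
      (g := fun g ↦ w ⬝ᵥ g) (by fun_prop) (by fun_prop),
    map_dotProduct_gaussianPi, dotProduct_zero, lintegral_exp_neg_mul_sq_gaussianReal _ hl,
    NNReal.coe_mul, Real.coe_toNNReal _ (dotProduct_self_nonneg w)]

lemma lintegral_exp_dotProduct_self_mul_gaussianPi {A : ℝ≥0} (hA : A ≠ 0)
    (f : (κ → ℝ) → ℝ≥0∞) :
    ∫⁻ g, ENNReal.ofReal (Real.exp ((1 - (A : ℝ)⁻¹) / 2 * (g ⬝ᵥ g))) * f g ∂gaussianPi 0 1 =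
      ENNReal.ofReal (Real.exp (Fintype.card κ * Real.log A / 2)) *
        ∫⁻ g, f g ∂gaussianPi 0 A := by
  rw [gaussianPi_eq_withDensity_gaussianPi 0 0 hA one_ne_zero,
    lintegral_withDensity_eq_lintegral_mul_non_measurable _ (by fun_prop)
      (ae_of_all _ fun _ ↦ ENNReal.ofReal_lt_top),
    ← lintegral_const_mul' _ _ ENNReal.ofReal_ne_top]
  refine lintegral_congr fun g ↦ ?_
  rw [Pi.mul_apply, ← mul_assoc, ← ENNReal.ofReal_mul (Real.exp_pos _).le, ← Real.exp_add,
    NNReal.coe_one, one_div, Real.log_inv, sub_zero]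
  congr 3
  ring

lemma lintegral_exp_sub_dotProduct_sq_gaussianPi (w : κ → ℝ) (L v : ℝ≥0) :
    ∫⁻ g, ENNReal.ofReal (Real.exp
        (-(L / (1 + L * v)) / 2 * ((g ⬝ᵥ w) ^ 2 - v * (g ⬝ᵥ g)))) ∂gaussianPi 0 1 =
      ENNReal.ofReal (Real.exp
        ((Fintype.card κ * Real.log (1 + L * v) - Real.log (1 + L * (w ⬝ᵥ w))) / 2)) := by
  obtain ⟨A, hA⟩ : ∃ A : ℝ≥0, (A : ℝ) = 1 + L * v := ⟨1 + L * v, by simp⟩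
  have hA_pos : 0 < (A : ℝ) := by rw [hA]; positivity
  have split_exp (g : κ → ℝ) :
      ENNReal.ofReal (Real.exp (-(L / A) / 2 * ((g ⬝ᵥ w) ^ 2 - v * (g ⬝ᵥ g)))) =
        ENNReal.ofReal (Real.exp ((1 - (A : ℝ)⁻¹) / 2 * (g ⬝ᵥ g))) *
          ENNReal.ofReal (Real.exp (-(L / A) / 2 * (w ⬝ᵥ g) ^ 2)) := by
    have tilt_eq : (L : ℝ) / A * v = 1 - (A : ℝ)⁻¹ := by
      field_simp
      linarith
    rw [← ENNReal.ofReal_mul (by positivity), ← Real.exp_add, ← tilt_eq, dotProduct_comm w]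
    ring_nf
  rw [← hA]
  simp_rw [split_exp]
  rw [lintegral_exp_dotProduct_self_mul_gaussianPi (NNReal.coe_ne_zero.1 hA_pos.ne'),
    lintegral_exp_neg_dotProduct_sq_gaussianPi w A (by positivity),
    ← ENNReal.ofReal_mul (by positivity), ← Real.exp_add, ← mul_assoc,
    div_mul_cancel₀ _ hA_pos.ne']
  ring_nf

end ExponentialMoments

section PartitionFunction

variable {ι κ : Type*} [Fintype ι] [Fintype κ] (L σ : ℝ≥0)

variable (ι κ) in
/-- The law of a random matrix with independent standard Gaussian entries, given by its rows. -/
noncomputable abbrev stdGaussianMatrix : Measure (ι → κ → ℝ) :=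
  Measure.pi fun _ ↦ gaussianPi 0 1

/-- A tilted version of `-|G w|²`, for the matrix with rows `G j`. The term `σ |G j|²` makes its
mean over `w ∼ N(v, σ I)` depend on `G` only through `|G v|²`; the logarithm makes the mean of its
exponential over a standard Gaussian matrix `G` independent of `w`. -/
noncomputable def tiltedEnergy (G : ι → κ → ℝ) (w : κ → ℝ) : ℝ :=
  -(L / (1 + L * σ)) / 2 * ∑ j, ((G j ⬝ᵥ w) ^ 2 - σ * (G j ⬝ᵥ G j)) +
    Fintype.card ι / 2 * Real.log (1 + L * (w ⬝ᵥ w))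

/-- The mean of `exp (tiltedEnergy L σ G w)` over the Gaussian prior `w ∼ N(0, τ I)`. It is
`ℝ≥0∞`-valued, so that Tonelli's theorem applies to its mean over `G`. -/
noncomputable def partitionFunction (τ : ℝ≥0) (G : ι → κ → ℝ) : ℝ≥0∞ :=
  ∫⁻ w, ENNReal.ofReal (Real.exp (tiltedEnergy L σ G w)) ∂gaussianPi 0 τ

lemma measurable_tiltedEnergy :
    Measurable fun p : (ι → κ → ℝ) × (κ → ℝ) ↦ tiltedEnergy L σ p.1 p.2 := by
  simp only [tiltedEnergy]
  fun_prop

lemma measurable_partitionFunction (τ : ℝ≥0) :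
    Measurable (partitionFunction (ι := ι) (κ := κ) L σ τ) :=
  (measurable_tiltedEnergy L σ).exp.ennreal_ofReal.lintegral_prod_right

lemma lintegral_exp_tiltedEnergy (w : κ → ℝ) :
    ∫⁻ G, ENNReal.ofReal (Real.exp (tiltedEnergy L σ G w)) ∂stdGaussianMatrix ι κ =
      ENNReal.ofReal (Real.exp
        (Fintype.card ι * Fintype.card κ * Real.log (1 + L * σ) / 2)) := by
  simp only [tiltedEnergy, Finset.mul_sum, Real.exp_add, Real.exp_sum]
  simp_rw [ENNReal.ofReal_mul (Finset.prod_nonneg fun _ _ ↦ (Real.exp_pos _).le),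
    ENNReal.ofReal_prod_of_nonneg fun _ _ ↦ (Real.exp_pos _).le]
  rw [lintegral_mul_const' _ _ ENNReal.ofReal_ne_top,
    lintegral_pi_prod_eq_prod_lintegral (f := fun _ g ↦ ENNReal.ofReal (Real.exp
      (-(L / (1 + L * σ)) / 2 * ((g ⬝ᵥ w) ^ 2 - σ * (g ⬝ᵥ g))))) (fun _ ↦ by fun_prop)]
  simp_rw [lintegral_exp_sub_dotProduct_sq_gaussianPi]
  rw [Finset.prod_const, Finset.card_univ, ← ENNReal.ofReal_pow (by positivity),
    ← ENNReal.ofReal_mul (by positivity), ← Real.exp_nat_mul, ← Real.exp_add]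
  ring_nf

lemma lintegral_partitionFunction (τ : ℝ≥0) :
    ∫⁻ G, partitionFunction L σ τ G ∂stdGaussianMatrix ι κ =
      ENNReal.ofReal (Real.exp
        (Fintype.card ι * Fintype.card κ * Real.log (1 + L * σ) / 2)) := by
  simp only [partitionFunction]
  rw [lintegral_lintegral_swap
    (measurable_tiltedEnergy L σ).exp.ennreal_ofReal.aemeasurable]
  simp_rw [lintegral_exp_tiltedEnergy]
  simp

lemma lintegral_partitionFunction_le (τ : ℝ≥0) :
    ∫⁻ G, partitionFunction L σ τ G ∂stdGaussianMatrix ι κ ≤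
      ENNReal.ofReal (Real.exp (Fintype.card ι * (L * (Fintype.card κ * σ)) / 2)) := by
  have log_le : Real.log (1 + L * σ) ≤ L * σ :=
    (Real.log_le_sub_one_of_pos (by positivity)).trans_eq (add_sub_cancel_left _ _)
  calc ∫⁻ G, partitionFunction L σ τ G ∂stdGaussianMatrix ι κ
      = ENNReal.ofReal
          (Real.exp (Fintype.card ι * (Fintype.card κ * Real.log (1 + L * σ)) / 2)) := by
        rw [lintegral_partitionFunction, mul_assoc]
    _ ≤ ENNReal.ofReal (Real.exp (Fintype.card ι * (Fintype.card κ * (L * σ)) / 2)) := by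
        gcongr
    _ = _ := by ring_nf

variable (G : ι → κ → ℝ) (v : κ → ℝ)

lemma integrable_log_one_add_dotProduct_self_gaussianPi :
    Integrable (fun w ↦ Real.log (1 + L * (w ⬝ᵥ w))) (gaussianPi v σ) :=
  integrable_log_one_add ((integrable_dotProduct_self_gaussianPi v σ).const_mul (L : ℝ))
    fun w ↦ mul_nonneg L.coe_nonneg (dotProduct_self_nonneg w)

lemma integrable_dotProduct_sq_sub_gaussianPi (a : κ → ℝ) (c : ℝ) :
    Integrable (fun w ↦ (a ⬝ᵥ w) ^ 2 - c) (gaussianPi v σ) :=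
  (memLp_dotProduct_gaussianPi v a σ).integrable_sq.sub (integrable_const c)

lemma integrable_sum_dotProduct_sq_sub_gaussianPi :
    Integrable (fun w ↦ ∑ j, ((G j ⬝ᵥ w) ^ 2 - σ * (G j ⬝ᵥ G j))) (gaussianPi v σ) :=
  integrable_finsetSum _ fun j _ ↦ integrable_dotProduct_sq_sub_gaussianPi σ v (G j) _

lemma integrable_tiltedEnergy : Integrable (tiltedEnergy L σ G) (gaussianPi v σ) :=
  ((integrable_sum_dotProduct_sq_sub_gaussianPi σ G v).const_mul _).add
    ((integrable_log_one_add_dotProduct_self_gaussianPi L σ v).const_mul _)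

lemma integral_tiltedEnergy :
    ∫ w, tiltedEnergy L σ G w ∂gaussianPi v σ =
      -(L / (1 + L * σ)) / 2 * ∑ j, (G j ⬝ᵥ v) ^ 2 +
        Fintype.card ι / 2 * ∫ w, Real.log (1 + L * (w ⬝ᵥ w)) ∂gaussianPi v σ := by
  have row (j : ι) : ∫ w, (G j ⬝ᵥ w) ^ 2 - σ * (G j ⬝ᵥ G j) ∂gaussianPi v σ = (G j ⬝ᵥ v) ^ 2 := by
    rw [integral_sub (memLp_dotProduct_gaussianPi v (G j) σ).integrable_sq (integrable_const _),
      integral_dotProduct_sq_gaussianPi, integral_const, probReal_univ, one_smul,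
      add_sub_cancel_right]
  simp only [tiltedEnergy]
  rw [integral_add ((integrable_sum_dotProduct_sq_sub_gaussianPi σ G v).const_mul _)
      ((integrable_log_one_add_dotProduct_self_gaussianPi L σ v).const_mul _),
    integral_const_mul, integral_const_mul, integral_finsetSum _ fun j _ ↦
      integrable_dotProduct_sq_sub_gaussianPi σ v (G j) _]
  simp_rw [row]

end PartitionFunction

section SmallBall

variable {ι κ : Type*} [Fintype ι] [Fintype κ]

/-- A lower bound for the mean of `log (1 + L |w|²)` over `w ∼ N(v, (s / dim) I)` with `|v| = 1`:
the logarithm at the mean `1 + s` of `|w|²`, minus a correction for the variance of `|w|²`. -/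
noncomputable def logGain (L s : ℝ) : ℝ :=
  Real.log (1 + L * (1 + s)) - L ^ 2 * (2 * s ^ 2 + 4 * s) / (1 + L * (1 + s))

variable [Nonempty κ] (L s : ℝ≥0) {v : κ → ℝ}

lemma logGain_le_integral_log_gaussianPi (hv : v ⬝ᵥ v = 1) :
    logGain L s ≤ ∫ w, Real.log (1 + L * (w ⬝ᵥ w)) ∂gaussianPi v (s / Fintype.card κ) := by
  have hd : (1 : ℝ) ≤ Fintype.card κ := by exact_mod_cast Fintype.card_pos
  have mean_eq : (1 : ℝ) + Fintype.card κ * (s / Fintype.card κ : ℝ≥0) = 1 + s := by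
    push_cast
    rw [mul_div_cancel₀ _ (by positivity)]
  have variance_le : 2 * Fintype.card κ * ((s / Fintype.card κ : ℝ≥0) : ℝ) ^ 2 +
      4 * (s / Fintype.card κ : ℝ≥0) * 1 ≤ 2 * s ^ 2 + 4 * s := by
    calc _ = (2 * s ^ 2 + 4 * s) / (Fintype.card κ : ℝ) := by
          push_cast
          field_simp
      _ ≤ 2 * s ^ 2 + 4 * s := div_le_self (by positivity) hd
  have := log_one_add_integral_sub_variance_le_integral_log
    ((memLp_dotProduct_self_gaussianPi v (s / Fintype.card κ)).const_mul (L : ℝ))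
    fun w ↦ mul_nonneg L.coe_nonneg (dotProduct_self_nonneg w)
  rw [integral_const_mul, integral_dotProduct_self_gaussianPi, variance_const_mul,
    variance_dotProduct_self_gaussianPi, hv, mean_eq] at this
  refine le_trans ?_ this
  rw [logGain]
  gcongr

lemma gaussianKL_of_dotProduct_self_eq_one (hv : v ⬝ᵥ v = 1) :
    gaussianKL v (s / Fintype.card κ) ((1 + s) / Fintype.card κ) =
      Fintype.card κ * Real.log ((1 + s) / s) / 2 := by
  have hd : (0 : ℝ) < Fintype.card κ := by exact_mod_cast Fintype.card_pos
  rw [gaussianKL, hv]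
  push_cast
  rw [div_div_div_cancel_right₀ hd.ne', mul_div_cancel₀ _ hd.ne']
  field_simp
  ring

variable {s}

lemma ofReal_exp_le_partitionFunction (hs : s ≠ 0) (G : ι → κ → ℝ) (hv : v ⬝ᵥ v = 1) :
    ENNReal.ofReal (Real.exp ((Fintype.card ι * logGain L s - L * ∑ j, (G j ⬝ᵥ v) ^ 2 -
      Fintype.card κ * Real.log ((1 + s) / s)) / 2)) ≤
      partitionFunction L (s / Fintype.card κ) ((1 + s) / Fintype.card κ) G := by
  have hd : (Fintype.card κ : ℝ≥0) ≠ 0 := by exact_mod_cast Fintype.card_ne_zero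
  refine le_trans ?_ (ofReal_exp_integral_sub_gaussianKL_le_lintegral_exp v (div_ne_zero hs hd)
    (by positivity) (integrable_tiltedEnergy L _ G v))
  have gain_le : Fintype.card ι / 2 * logGain L s ≤ Fintype.card ι / 2 *
      ∫ w, Real.log (1 + L * (w ⬝ᵥ w)) ∂gaussianPi v (s / Fintype.card κ) := by
    gcongr
    exact logGain_le_integral_log_gaussianPi L s hv
  have energy_le : (L / (1 + L * (s / Fintype.card κ : ℝ≥0)) : ℝ) * ∑ j, (G j ⬝ᵥ v) ^ 2 ≤
      L * ∑ j, (G j ⬝ᵥ v) ^ 2 := by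
    gcongr
    exact div_le_self L.coe_nonneg (le_add_of_nonneg_right (by positivity))
  rw [integral_tiltedEnergy, gaussianKL_of_dotProduct_self_eq_one s hv]
  gcongr
  linarith

theorem measure_exists_sum_dotProduct_sq_le (hs : s ≠ 0) (T : ℝ) :
    stdGaussianMatrix ι κ {G | ∃ v, v ⬝ᵥ v = 1 ∧ ∑ j, (G j ⬝ᵥ v) ^ 2 ≤ T} ≤
      ENNReal.ofReal (Real.exp ((L * T + Fintype.card κ * Real.log ((1 + s) / s) +
        Fintype.card ι * (L * s - logGain L s)) / 2)) := by
  let Z : (ι → κ → ℝ) → ℝ≥0∞ :=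
    partitionFunction L (s / Fintype.card κ) ((1 + s) / Fintype.card κ)
  obtain ⟨b, hb⟩ : ∃ b : ℝ, b = (Fintype.card ι * logGain L s - L * T -
    Fintype.card κ * Real.log ((1 + s) / s)) / 2 := ⟨_, rfl⟩
  have le_Z_of_small : {G : ι → κ → ℝ | ∃ v, v ⬝ᵥ v = 1 ∧ ∑ j, (G j ⬝ᵥ v) ^ 2 ≤ T} ⊆
      {G | ENNReal.ofReal (Real.exp b) ≤ Z G} := by
    rintro G ⟨v, hv, hG⟩
    refine le_trans ?_ (ofReal_exp_le_partitionFunction L hs G hv)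
    rw [hb]
    gcongr
  have mean_Z_le : ∫⁻ G, Z G ∂stdGaussianMatrix ι κ ≤
      ENNReal.ofReal (Real.exp (Fintype.card ι * (L * s) / 2)) := by
    have hd : (Fintype.card κ : ℝ) ≠ 0 := by exact_mod_cast Fintype.card_ne_zero
    refine (lintegral_partitionFunction_le L _ _).trans_eq ?_
    rw [NNReal.coe_div, NNReal.coe_natCast, mul_div_cancel₀ _ hd]
  calc stdGaussianMatrix ι κ {G | ∃ v, v ⬝ᵥ v = 1 ∧ ∑ j, (G j ⬝ᵥ v) ^ 2 ≤ T}
      ≤ stdGaussianMatrix ι κ {G | ENNReal.ofReal (Real.exp b) ≤ Z G} :=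
        measure_mono le_Z_of_small
    _ ≤ (∫⁻ G, Z G ∂stdGaussianMatrix ι κ) / ENNReal.ofReal (Real.exp b) :=
        meas_ge_le_lintegral_div (measurable_partitionFunction _ _ _).aemeasurable
          (ENNReal.ofReal_pos.2 (Real.exp_pos _)).ne' ENNReal.ofReal_ne_top
    _ ≤ ENNReal.ofReal (Real.exp (Fintype.card ι * (L * s) / 2)) /
          ENNReal.ofReal (Real.exp b) := by gcongr
    _ = _ := by
        rw [← ENNReal.ofReal_div_of_pos (Real.exp_pos _), ← Real.exp_sub, hb]
        ring_nf

end SmallBall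

section Constants

variable {c : ℝ}

lemma four_mul_le_log_one_add (hc0 : 0 ≤ c) (hc1 : c < 1) :
    4 * c ≤ Real.log (1 + 4 * c / (1 - c) ^ 2) := by
  have hc : 0 < 1 - c := sub_pos.2 hc1
  calc 4 * c = 2 * (2 * (2 * c / (1 - c)) / (2 * c / (1 - c) + 2)) := by
        field_simp
        ring
    _ ≤ 2 * Real.log (1 + 2 * c / (1 - c)) := by
        gcongr
        exact Real.le_log_one_add_of_nonneg (by positivity)
    _ = Real.log (1 + 4 * c / (1 - c) ^ 2) := by
        rw [← Nat.cast_ofNat, ← Real.log_pow]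
        congr 1
        field_simp
        ring

lemma log_128_le : Real.log 128 ≤ 4.853 := by
  rw [show (128 : ℝ) = 2 ^ 7 by norm_num, Real.log_pow]
  push_cast
  linarith [Real.log_two_lt_d9]

lemma one_div_one_add_sq_le (hc0 : 0 ≤ c) (hc : c ≤ 1 / 2) : 1 / (1 + c) ^ 2 ≤ 1 - c := by
  rw [div_le_iff₀ (by positivity)]
  nlinarith [mul_nonneg hc0 (show 0 ≤ 1 - c - c ^ 2 by nlinarith)]

/-- The value of `L` in `logGain L s` used for `s = 1 / 127`: it makes `1 + L (1 + s)` the square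
of `(1 + c) / (1 - c)`. The value of `s` makes `(1 + s) / s` a power of two. -/
noncomputable def tiltStrength (c : ℝ) : ℝ := 127 * c / (32 * (1 - c) ^ 2)

lemma tiltStrength_nonneg (hc0 : 0 ≤ c) : 0 ≤ tiltStrength c := by
  rw [tiltStrength]
  positivity

lemma four_mul_sub_le_logGain (hc0 : 0 ≤ c) (hc : c ≤ 1 / 2) :
    4 * c - 255 / 512 * c ^ 2 * (1 - c) / (1 - c) ^ 2 ≤
      logGain (tiltStrength c) (1 / 127) := by
  have hc1 : 0 < 1 - c := by linarith
  have mean_eq : tiltStrength c * (1 + 1 / 127) = 4 * c / (1 - c) ^ 2 := by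
    rw [tiltStrength]
    field_simp
    ring
  have variance_eq : tiltStrength c ^ 2 * (2 * (1 / 127) ^ 2 + 4 * (1 / 127)) /
      (1 + 4 * c / (1 - c) ^ 2) = 255 / 512 * c ^ 2 * (1 / (1 + c) ^ 2) / (1 - c) ^ 2 := by
    rw [show 1 + 4 * c / (1 - c) ^ 2 = (1 + c) ^ 2 / (1 - c) ^ 2 by field_simp; ring,
      tiltStrength]
    field_simp
    ring
  rw [logGain, mean_eq, variance_eq]
  gcongr
  · exact four_mul_le_log_one_add hc0 (by linarith)
  · exact one_div_one_add_sq_le hc0 hc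

lemma mul_add_le_logGain (hc0 : 0 ≤ c) (hc : c ≤ 1 / 2) :
    tiltStrength c * ((1 - 2 * c) ^ 2 + 1 / 127) + c ^ 2 * (1 + Real.log 128) ≤
      logGain (tiltStrength c) (1 / 127) := by
  have hc1 : 0 < 1 - c := by linarith
  have quadratic_le :
      95 / 8 * c - 63 / 8 + 5.853 * (1 - c) ^ 2 + 255 / 512 * (1 - c) ≤ 0 := by
    nlinarith
  calc _ ≤ tiltStrength c * ((1 - 2 * c) ^ 2 + 1 / 127) + c ^ 2 * 5.853 := by
        gcongr
        linarith [log_128_le]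
    _ ≤ 4 * c - 255 / 512 * c ^ 2 * (1 - c) / (1 - c) ^ 2 := by
        rw [← sub_nonpos, tiltStrength]
        calc _ = c ^ 2 / (1 - c) ^ 2 * (95 / 8 * c - 63 / 8 + 5.853 * (1 - c) ^ 2 +
                255 / 512 * (1 - c)) := by
              field_simp
              ring
          _ ≤ 0 := mul_nonpos_of_nonneg_of_nonpos (by positivity) quadratic_le
    _ ≤ _ := four_mul_sub_le_logGain hc0 hc

end Constants

section SmallestSingularValue

variable {ι κ : Type*} [Fintype ι] [Fintype κ]

theorem measure_exists_sum_dotProduct_sq_le_mul_card {c : ℝ} (hc0 : 0 ≤ c) (hc : c ≤ 1 / 2)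
    (hcard : Fintype.card κ ≤ Fintype.card ι * c ^ 2) :
    stdGaussianMatrix ι κ
        {G | ∃ v, v ⬝ᵥ v = 1 ∧ ∑ j, (G j ⬝ᵥ v) ^ 2 ≤ (1 - 2 * c) ^ 2 * Fintype.card ι} ≤
      ENNReal.ofReal (Real.exp (-(Fintype.card ι * c ^ 2) / 2)) := by
  cases isEmpty_or_nonempty κ
  · simp [dotProduct]
  obtain ⟨L, hL⟩ : ∃ L : ℝ≥0, (L : ℝ) = tiltStrength c := ⟨⟨_, tiltStrength_nonneg hc0⟩, rfl⟩
  refine (measure_exists_sum_dotProduct_sq_le L (s := 1 / 127) (by positivity) _).trans ?_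
  have ratio_eq : (1 + ((1 / 127 : ℝ≥0) : ℝ)) / (1 / 127 : ℝ≥0) = 128 := by
    push_cast
    norm_num
  have entropy_le : Fintype.card κ * Real.log 128 ≤ Fintype.card ι * c ^ 2 * Real.log 128 := by
    gcongr
  have gain_le := mul_le_mul_of_nonneg_left (mul_add_le_logGain hc0 hc)
    (Nat.cast_nonneg (α := ℝ) (Fintype.card ι))
  rw [← hL] at gain_le
  rw [ratio_eq]
  push_cast
  gcongr
  linarith

end SmallestSingularValue

section Coercive

variable {ι κ : Type*} [Fintype ι] [Fintype κ] {T : ℝ}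

lemma mul_dotProduct_self_le_sum_dotProduct_sq {G : ι → κ → ℝ}
    (hG : ∀ v, v ⬝ᵥ v = 1 → T ≤ ∑ j, (G j ⬝ᵥ v) ^ 2) (v : κ → ℝ) :
    T * (v ⬝ᵥ v) ≤ ∑ j, (G j ⬝ᵥ v) ^ 2 := by
  obtain hv | hv := (dotProduct_self_nonneg v).eq_or_lt'
  · rw [hv, mul_zero]
    positivity
  have sqrt_sq : √(v ⬝ᵥ v) ^ 2 = v ⬝ᵥ v := Real.sq_sqrt hv.le
  have unit_bound := hG ((√(v ⬝ᵥ v))⁻¹ • v) <| by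
    rw [smul_dotProduct, dotProduct_smul, smul_eq_mul, smul_eq_mul, ← mul_assoc, ← sq, inv_pow,
      sqrt_sq, inv_mul_cancel₀ hv.ne']
  simp_rw [dotProduct_smul, smul_eq_mul, mul_pow, inv_pow, sqrt_sq, ← Finset.mul_sum] at unit_bound
  rwa [le_inv_mul_iff₀' hv] at unit_bound

lemma dotProduct_transpose_mul_self_mulVec (A : Matrix ι κ ℝ) (v : κ → ℝ) :
    v ⬝ᵥ ((Aᵀ * A) *ᵥ v) = ∑ j, (A j ⬝ᵥ v) ^ 2 := by
  rw [← mulVec_mulVec, dotProduct_mulVec, vecMul_transpose]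
  simp only [dotProduct, mulVec, sq]

lemma isUnit_of_mul_dotProduct_self_le [DecidableEq κ] {M : Matrix κ κ ℝ} (hT : 0 < T)
    (hM : ∀ v, T * (v ⬝ᵥ v) ≤ v ⬝ᵥ (M *ᵥ v)) : IsUnit M := by
  refine mulVec_injective_iff_isUnit.1 <| (injective_iff_map_eq_zero M.mulVecLin).2 fun v hv ↦ ?_
  have energy_le := hM v
  rw [← mulVecLin_apply, hv, dotProduct_zero] at energy_le
  exact dotProduct_self_eq_zero.1 <|
    (nonpos_of_mul_nonpos_right energy_le hT).antisymm (dotProduct_self_nonneg v)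

lemma mul_norm_le_norm_toEuclideanLin [DecidableEq κ] {M : Matrix κ κ ℝ}
    (hM : ∀ v, T * (v ⬝ᵥ v) ≤ v ⬝ᵥ (M *ᵥ v)) (x : EuclideanSpace ℝ κ) :
    T * ‖x‖ ≤ ‖toEuclideanLin M x‖ := by
  obtain hx | hx := (norm_nonneg x).eq_or_lt'
  · rw [hx, mul_zero]
    positivity
  refine le_of_mul_le_mul_left ?_ hx
  calc ‖x‖ * (T * ‖x‖) = T * (x.ofLp ⬝ᵥ x.ofLp) := by
        rw [mul_left_comm, ← sq, EuclideanSpace.real_norm_sq_eq]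
        simp only [dotProduct, sq]
    _ ≤ x.ofLp ⬝ᵥ (M *ᵥ x.ofLp) := hM _
    _ = inner ℝ x (toEuclideanLin M x) := by
        rw [EuclideanSpace.inner_eq_star_dotProduct, dotProduct_comm]
        simp
    _ ≤ ‖x‖ * ‖toEuclideanLin M x‖ := real_inner_le_norm _ _

lemma matOpNorm_inv_le_of_mul_dotProduct_self_le {n : ℕ} {M : Matrix (Fin n) (Fin n) ℝ}
    (hT : 0 < T) (hM : ∀ v, T * (v ⬝ᵥ v) ≤ v ⬝ᵥ (M *ᵥ v)) : matOpNorm M⁻¹ ≤ 1 / T := by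
  have hdet : IsUnit M.det := (isUnit_iff_isUnit_det M).1 (isUnit_of_mul_dotProduct_self_le hT hM)
  refine ContinuousLinearMap.opNorm_le_bound _ (by positivity) fun x ↦ ?_
  have right_inv : toEuclideanLin M (toEuclideanLin M⁻¹ x) = x := by
    simp [toLpLin_apply, mul_nonsing_inv _ hdet]
  have := mul_norm_le_norm_toEuclideanLin hM (toEuclideanLin M⁻¹ x)
  rw [right_inv] at this
  rw [one_div, le_inv_mul_iff₀ hT]
  exact this

end Coercive

lemma isUnit_and_matOpNorm_inv_le_of_forall_unit {k d : ℕ} {G : Fin k → Fin d → ℝ} {T : ℝ}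
    (hT : 0 < T) (hG : ∀ v, v ⬝ᵥ v = 1 → T ≤ ∑ j, (G j ⬝ᵥ v) ^ 2) :
    IsUnit ((Matrix.of G)ᵀ * Matrix.of G) ∧
      matOpNorm ((Matrix.of G)ᵀ * Matrix.of G)⁻¹ ≤ 1 / T := by
  have coercive (v : Fin d → ℝ) :
      T * (v ⬝ᵥ v) ≤ v ⬝ᵥ (((Matrix.of G)ᵀ * Matrix.of G) *ᵥ v) :=
    (mul_dotProduct_self_le_sum_dotProduct_sq hG v).trans_eq
      (dotProduct_transpose_mul_self_mulVec (Matrix.of G) v).symm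
  exact ⟨isUnit_of_mul_dotProduct_self_le hT coercive,
    matOpNorm_inv_le_of_mul_dotProduct_self_le hT coercive⟩

lemma ofReal_one_sub_le_measure_of_compl {Ω : Type*} [MeasurableSpace Ω] {μ : Measure Ω}
    [IsProbabilityMeasure μ] {s : Set Ω} {p : ℝ} (hp : 0 ≤ p) (hs : μ sᶜ ≤ ENNReal.ofReal p) :
    ENNReal.ofReal (1 - p) ≤ μ s := by
  rw [ENNReal.ofReal_sub _ hp, ENNReal.ofReal_one, tsub_le_iff_right]
  calc 1 = μ Set.univ := measure_univ.symm
    _ ≤ μ s + μ sᶜ := measure_univ_le_add_compl s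
    _ ≤ μ s + ENNReal.ofReal p := by gcongr

/-- Lemma 2.6: for `G` a `k × d` matrix of i.i.d. standard Gaussians, with
`0 < c₁ < 1/2` and `k ≥ d/c₁²`, with probability at least `1 − exp(−kc₁²/2)` the
matrix `GᵀG` is invertible and `‖(GᵀG)⁻¹‖_op ≤ 1/((1 − 2c₁)² k)`. -/
theorem stmt_3 (k d : ℕ) (c₁ : ℝ) (hc₁0 : 0 < c₁) (hc₁ : c₁ < 1 / 2)
    (hk : (d : ℝ) / c₁ ^ 2 ≤ (k : ℝ)) :
    ENNReal.ofReal (1 - Real.exp (-((k : ℝ) * c₁ ^ 2) / 2)) ≤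
      (Measure.pi fun _ : Fin k => Measure.pi fun _ : Fin d => gaussianReal 0 1)
        {G | IsUnit ((Matrix.of G)ᵀ * Matrix.of G) ∧
          matOpNorm ((Matrix.of G)ᵀ * Matrix.of G)⁻¹
            ≤ 1 / ((1 - 2 * c₁) ^ 2 * (k : ℝ))} := by
  obtain rfl | hkpos := k.eq_zero_or_pos
  · simp
  have hT : 0 < (1 - 2 * c₁) ^ 2 * (k : ℝ) :=
    mul_pos (pow_pos (by linarith) 2) (Nat.cast_pos.2 hkpos)
  have hcard : (Fintype.card (Fin d) : ℝ) ≤ Fintype.card (Fin k) * c₁ ^ 2 := by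
    simpa only [Fintype.card_fin] using (div_le_iff₀ (by positivity)).1 hk
  have small_ball := measure_exists_sum_dotProduct_sq_le_mul_card hc₁0.le hc₁.le hcard
  rw [Fintype.card_fin] at small_ball
  refine ofReal_one_sub_le_measure_of_compl (Real.exp_pos _).le <|
    (measure_mono fun G hG ↦ ?_).trans small_ball
  by_contra! no_small_image
  exact hG <| isUnit_and_matOpNorm_inv_le_of_forall_unit hT fun v hv ↦
    (lt_of_not_ge fun hle ↦ no_small_image ⟨v, hv, hle⟩).le
end

section
/- Let X_1, …, X_m be i.i.d. random variables with the standard Cauchy distribution Cauchy(0,1), and let 0 < τ < 1. Then the probability that at least m/2 of the X_i exceed τ, or at least m/2 of the X_i are less than −τ, is at most 2·exp(−m·τ²/8). In particular, the probability that the sample median of X_1, …, X_m lies outside the interval [−τ, τ] is at most 2·exp(−m·τ²/8). -/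
open MeasureTheory

/-- The centered Cauchy distribution with scale `γ`, given by its density
`x ↦ γ/(π(γ² + x²))`; `cauchyMeasure 1` is the standard Cauchy distribution. -/
noncomputable def cauchyMeasure (γ : ℝ) : Measure ℝ :=
  volume.withDensity fun x => ENNReal.ofReal (γ / (Real.pi * (γ ^ 2 + x ^ 2)))

/-- The sample median of `X_1, …, X_m` (the entry at position `⌊m/2⌋` of the sorted
list of values, `0`-indexed). -/
noncomputable def sampleMedian {m : ℕ} (X : Fin m → ℝ) : ℝ :=
  ((Multiset.map X Finset.univ.val).sort (· ≤ ·)).getD (m / 2) 0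

/-!
A sample median above `b` forces at least half of the sample above `b`, and symmetrically below `a`.
When each tail has mass at most `1/2 - ε`, either event makes an empirical frequency exceed its mean
by `ε`, so Hoeffding's inequality bounds its probability by `exp (-2mε²)`. The tail of the Cauchy
distribution at distance `τ` from its centre has mass exactly `1/2 - arctan (τ/γ) / π`, and
`arctan τ ≥ πτ/4` on `[0, 1]` because `arctan` is concave on `[0, ∞)`.
-/

open scoped NNReal

section Hoeffding

variable {ι E : Type*} [Fintype ι] [MeasurableSpace E] {μ : Measure E} [IsProbabilityMeasure μ]

lemma measureReal_pi_le_sum_le_of_hasSubgaussianMGF {f : E → ℝ} {c : ℝ≥0}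
    (hf : ProbabilityTheory.HasSubgaussianMGF f c μ) {t : ℝ} (ht : 0 ≤ t) :
    (Measure.pi fun _ : ι => μ).real {X | t ≤ ∑ i, f (X i)} ≤
      Real.exp (-t ^ 2 / (2 * (Fintype.card ι * c))) := by
  have hindep : ProbabilityTheory.iIndepFun (fun (i : ι) (X : ι → E) => f (X i))
      (Measure.pi fun _ => μ) :=
    ProbabilityTheory.iIndepFun_pi fun _ => hf.aemeasurable
  have hcoord (i : ι) : ProbabilityTheory.HasSubgaussianMGF (fun X : ι → E => f (X i)) c
      (Measure.pi fun _ => μ) := by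
    refine .of_map (Y := Function.eval i) (measurable_pi_apply i).aemeasurable ?_
    rwa [(measurePreserving_eval (fun _ : ι => μ) i).map_eq]
  simpa using ProbabilityTheory.HasSubgaussianMGF.measure_sum_ge_le_of_iIndepFun hindep
    (s := Finset.univ) (fun i _ => hcoord i) ht

lemma hasSubgaussianMGF_indicator_one_sub_measureReal {A : Set E} (hA : MeasurableSet A) :
    ProbabilityTheory.HasSubgaussianMGF (fun x => A.indicator 1 x - μ.real A) (1 / 4) μ := by
  have hbounds (x : E) : A.indicator (1 : E → ℝ) x ∈ Set.Icc 0 1 :=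
    ⟨Set.indicator_nonneg (fun _ _ => zero_le_one) x,
      Set.indicator_le_self' (fun _ _ => zero_le_one) x⟩
  have hoeffding := ProbabilityTheory.hasSubgaussianMGF_of_mem_Icc (μ := μ)
    (measurable_one.indicator hA).aemeasurable (.of_forall hbounds)
  rw [integral_indicator_one hA] at hoeffding
  convert hoeffding using 1
  norm_num [div_pow]

lemma measureReal_pi_le_card_filter_le {p : E → Prop} [DecidablePred p]
    (hp : MeasurableSet {x | p x}) {ε : ℝ} (hε : 0 ≤ ε) :
    (Measure.pi fun _ : ι => μ).real
        {X | Fintype.card ι * (μ.real {x | p x} + ε) ≤ (({i | p (X i)} : Finset ι).card : ℝ)} ≤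
      Real.exp (-(2 * Fintype.card ι * ε ^ 2)) := by
  have hsum (X : ι → E) : ∑ i, ({x | p x}.indicator 1 (X i) - μ.real {x | p x}) =
      (({i | p (X i)} : Finset ι).card : ℝ) - Fintype.card ι * μ.real {x | p x} := by
    simp [Finset.sum_sub_distrib, Set.indicator_apply]
  have htail := measureReal_pi_le_sum_le_of_hasSubgaussianMGF (ι := ι)
    (hasSubgaussianMGF_indicator_one_sub_measureReal (μ := μ) hp)
    (t := Fintype.card ι * ε) (by positivity)
  simp only [hsum, le_sub_iff_add_le'] at htail
  simp only [mul_add]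
  refine htail.trans_eq (congrArg Real.exp ?_)
  rcases eq_or_ne (Fintype.card ι : ℝ) 0 with hcard | hcard
  · simp [hcard]
  · push_cast
    field_simp
    norm_num

lemma measure_pi_half_le_card_filter_le {p : E → Prop} [DecidablePred p]
    (hp : MeasurableSet {x | p x}) {ε : ℝ} (hε : 0 ≤ ε) (hμ : μ.real {x | p x} ≤ 1 / 2 - ε) :
    (Measure.pi fun _ : ι => μ)
        {X | (Fintype.card ι : ℝ) / 2 ≤ (({i | p (X i)} : Finset ι).card : ℝ)} ≤
      ENNReal.ofReal (Real.exp (-(2 * Fintype.card ι * ε ^ 2))) := by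
  have hmean : (Fintype.card ι : ℝ) * (μ.real {x | p x} + ε) ≤ Fintype.card ι / 2 := by
    rw [div_eq_mul_one_div]
    gcongr
    linarith
  rw [← ofReal_measureReal]
  exact ENNReal.ofReal_le_ofReal <| (measureReal_mono fun X hX => hmean.trans hX).trans
    (measureReal_pi_le_card_filter_le hp hε)

lemma measure_pi_half_le_card_or_half_le_card_le {ν : Measure ℝ} [IsProbabilityMeasure ν]
    {a b ε : ℝ} (hε : 0 ≤ ε) (hlower : ν.real (Set.Iio a) ≤ 1 / 2 - ε)
    (hupper : ν.real (Set.Ioi b) ≤ 1 / 2 - ε) :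
    (Measure.pi fun _ : ι => ν)
        {X | (Fintype.card ι : ℝ) / 2 ≤ (({i | b < X i} : Finset ι).card : ℝ) ∨
             (Fintype.card ι : ℝ) / 2 ≤ (({i | X i < a} : Finset ι).card : ℝ)} ≤
      ENNReal.ofReal (2 * Real.exp (-(2 * Fintype.card ι * ε ^ 2))) := by
  rw [Set.ofPred_or, two_mul (Real.exp _),
    ENNReal.ofReal_add (Real.exp_nonneg _) (Real.exp_nonneg _)]
  exact (measure_union_le _ _).trans <| add_le_add
    (measure_pi_half_le_card_filter_le (p := (b < ·)) measurableSet_Ioi hε hupper)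
    (measure_pi_half_le_card_filter_le (p := (· < a)) measurableSet_Iio hε hlower)

end Hoeffding

section OrderStatistics

variable {α : Type*} {l : List α} {a : α} {k : ℕ}

lemma length_le_add_countP_of_lt_getElem [Preorder α] [DecidableLT α] (hl : l.SortedLE)
    (hk : k < l.length) (ha : a < l[k]) : l.length ≤ k + l.countP (a < ·) := by
  have hdrop : (l.drop k).countP (a < ·) = (l.drop k).length := by
    refine List.countP_eq_length.mpr fun x hx => ?_
    obtain ⟨i, hi, rfl⟩ := List.mem_iff_getElem.mp hx
    rw [List.getElem_drop]
    exact decide_eq_true (ha.trans_le (hl.getElem_le_getElem_of_le (Nat.le_add_right k i)))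
  have hle : (l.drop k).countP (a < ·) ≤ l.countP (a < ·) := (List.drop_sublist k l).countP_le
  rw [hdrop, List.length_drop] at hle
  omega

lemma lt_countP_of_getElem_lt [Preorder α] [DecidableLT α] (hl : l.SortedLE)
    (hk : k < l.length) (ha : l[k] < a) : k < l.countP (· < a) := by
  have htake : (l.take (k + 1)).countP (· < a) = (l.take (k + 1)).length := by
    refine List.countP_eq_length.mpr fun x hx => ?_
    obtain ⟨i, hi, rfl⟩ := List.mem_iff_getElem.mp hx
    rw [List.getElem_take]
    have hik : i ≤ k := by grind
    exact decide_eq_true ((hl.getElem_le_getElem_of_le hik).trans_lt ha)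
  have hle : (l.take (k + 1)).countP (· < a) ≤ l.countP (· < a) :=
    (List.take_sublist (k + 1) l).countP_le
  rw [htake, List.length_take] at hle
  omega

lemma countP_sort_map_univ {ι : Type*} [Fintype ι] [LinearOrder α] (X : ι → α) (p : α → Prop)
    [DecidablePred p] :
    ((Multiset.map X Finset.univ.val).sort (· ≤ ·)).countP p =
      ({i | p (X i)} : Finset ι).card := by
  rw [← Multiset.coe_countP, Multiset.sort_eq, Multiset.countP_map]
  rfl

end OrderStatistics

section SampleMedian

variable {m : ℕ} {a b : ℝ}

lemma sampleMedian_eq_getElem (X : Fin m → ℝ)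
    (hmid : m / 2 < ((Multiset.map X Finset.univ.val).sort (· ≤ ·)).length) :
    sampleMedian X = ((Multiset.map X Finset.univ.val).sort (· ≤ ·))[m / 2] :=
  List.getD_eq_getElem _ _ hmid

lemma half_le_card_lt_of_lt_sampleMedian {X : Fin m → ℝ} (hb : b < sampleMedian X) :
    (m : ℝ) / 2 ≤ (({i | b < X i} : Finset (Fin m)).card : ℝ) := by
  rcases m.eq_zero_or_pos with rfl | hm
  · simp
  have hlen : ((Multiset.map X Finset.univ.val).sort (· ≤ ·)).length = m := by simp
  have hmid : m / 2 < ((Multiset.map X Finset.univ.val).sort (· ≤ ·)).length := by omega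
  rw [sampleMedian_eq_getElem X hmid] at hb
  have hcount := length_le_add_countP_of_lt_getElem
    (Multiset.pairwise_sort _ _).sortedLE hmid hb
  rw [countP_sort_map_univ, hlen] at hcount
  rw [div_le_iff₀ two_pos]
  exact_mod_cast (by omega : m ≤ ({i | b < X i} : Finset (Fin m)).card * 2)

lemma half_le_card_lt_of_sampleMedian_lt {X : Fin m → ℝ} (ha : sampleMedian X < a) :
    (m : ℝ) / 2 ≤ (({i | X i < a} : Finset (Fin m)).card : ℝ) := by
  rcases m.eq_zero_or_pos with rfl | hm
  · simp
  have hmid : m / 2 < ((Multiset.map X Finset.univ.val).sort (· ≤ ·)).length := by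
    simpa using Nat.div_lt_self hm one_lt_two
  rw [sampleMedian_eq_getElem X hmid] at ha
  have hcount := lt_countP_of_getElem_lt (Multiset.pairwise_sort _ _).sortedLE hmid ha
  rw [countP_sort_map_univ] at hcount
  rw [div_le_iff₀ two_pos]
  exact_mod_cast (by omega : m ≤ ({i | X i < a} : Finset (Fin m)).card * 2)

lemma half_le_card_or_half_le_card_of_sampleMedian_notMem_Icc {X : Fin m → ℝ}
    (hX : sampleMedian X ∉ Set.Icc a b) :
    (m : ℝ) / 2 ≤ (({i | b < X i} : Finset (Fin m)).card : ℝ) ∨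
      (m : ℝ) / 2 ≤ (({i | X i < a} : Finset (Fin m)).card : ℝ) := by
  rcases lt_or_ge (sampleMedian X) a with ha | ha
  · exact .inr (half_le_card_lt_of_sampleMedian_lt ha)
  · exact .inl (half_le_card_lt_of_lt_sampleMedian (not_le.mp fun hb => hX ⟨ha, hb⟩))

end SampleMedian

section CauchyDistribution

lemma hasDerivAt_arctan_div_pi_cauchyPDFReal (x₀ : ℝ) (γ : ℝ≥0) (x : ℝ) :
    HasDerivAt (fun y => Real.arctan ((y - x₀) / γ) / Real.pi)
      (ProbabilityTheory.cauchyPDFReal x₀ γ x) x := by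
  have hderiv := ((((hasDerivAt_id x).sub_const x₀).div_const (γ : ℝ)).arctan).div_const Real.pi
  refine hderiv.congr_deriv ?_
  rw [ProbabilityTheory.cauchyPDFReal_def']
  simp only [id, NNReal.coe_inv]
  ring

lemma integral_Ioi_cauchyPDFReal (x₀ : ℝ) {γ : ℝ≥0} (hγ : γ ≠ 0) (t : ℝ) :
    ∫ x in Set.Ioi t, ProbabilityTheory.cauchyPDFReal x₀ γ x =
      1 / 2 - Real.arctan ((t - x₀) / γ) / Real.pi := by
  have hlim : Filter.Tendsto (fun y => Real.arctan ((y - x₀) / γ) / Real.pi) Filter.atTop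
      (nhds (1 / 2)) := by
    have hhalf : Real.pi / 2 / Real.pi = 1 / 2 := by field
    rw [← hhalf]
    exact ((tendsto_nhds_of_tendsto_nhdsWithin Real.tendsto_arctan_atTop).comp
      ((Filter.tendsto_atTop_add_const_right _ (-x₀) Filter.tendsto_id).atTop_div_const
        (by positivity))).div_const Real.pi
  exact integral_Ioi_of_hasDerivAt_of_tendsto'
    (fun x _ => hasDerivAt_arctan_div_pi_cauchyPDFReal x₀ γ x)
    (ProbabilityTheory.integrable_cauchyPDFReal x₀).integrableOn hlim

lemma measureReal_cauchyMeasure_Ioi (x₀ : ℝ) {γ : ℝ≥0} (hγ : γ ≠ 0) (t : ℝ) :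
    (ProbabilityTheory.cauchyMeasure x₀ γ).real (Set.Ioi t) =
      1 / 2 - Real.arctan ((t - x₀) / γ) / Real.pi := by
  rw [← integral_Ioi_cauchyPDFReal x₀ hγ, ProbabilityTheory.cauchyMeasure_of_scale_ne_zero x₀ hγ,
    measureReal_def, withDensity_apply _ measurableSet_Ioi]
  exact (integral_eq_lintegral_of_nonneg_ae
    (.of_forall fun x => (ProbabilityTheory.cauchyPDF_pos x₀ hγ x).le)
    (ProbabilityTheory.stronglyMeasurable_cauchyPDFReal x₀ γ).aestronglyMeasurable).symm

lemma measureReal_cauchyMeasure_Iic (x₀ : ℝ) {γ : ℝ≥0} (hγ : γ ≠ 0) (t : ℝ) :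
    (ProbabilityTheory.cauchyMeasure x₀ γ).real (Set.Iic t) =
      1 / 2 + Real.arctan ((t - x₀) / γ) / Real.pi := by
  rw [← Set.compl_Ioi, probReal_compl_eq_one_sub measurableSet_Ioi,
    measureReal_cauchyMeasure_Ioi x₀ hγ]
  ring

lemma cauchyMeasure_coe_eq {γ : ℝ≥0} (hγ : γ ≠ 0) :
    cauchyMeasure γ = ProbabilityTheory.cauchyMeasure 0 γ := by
  rw [ProbabilityTheory.cauchyMeasure_of_scale_ne_zero 0 hγ, cauchyMeasure]
  congr with x
  rw [ProbabilityTheory.cauchyPDF_def, ProbabilityTheory.cauchyPDFReal_def]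
  congr 1
  field

end CauchyDistribution

section Arctan

lemma concaveOn_arctan_Ici_zero : ConcaveOn ℝ (Set.Ici 0) Real.arctan := by
  refine AntitoneOn.concaveOn_of_deriv (convex_Ici 0) Real.continuous_arctan.continuousOn
    Real.differentiable_arctan.differentiableOn fun x hx y _ hxy => ?_
  have hx₀ : 0 ≤ x := interior_subset hx
  simp only [Real.deriv_arctan]
  gcongr

lemma div_four_le_arctan_div_pi {x : ℝ} (hx₀ : 0 ≤ x) (hx₁ : x ≤ 1) :
    x / 4 ≤ Real.arctan x / Real.pi := by
  have hchord := concaveOn_arctan_Ici_zero.2 Set.self_mem_Ici (Set.mem_Ici.mpr zero_le_one)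
    (sub_nonneg.mpr hx₁) hx₀ (sub_add_cancel 1 x)
  simp only [Real.arctan_zero, Real.arctan_one, smul_eq_mul, mul_zero, mul_one, zero_add] at hchord
  rw [le_div_iff₀ Real.pi_pos]
  linarith

lemma exp_neg_arctan_div_pi_sq_le {c x : ℝ} (hc : 0 ≤ c) (hx₀ : 0 ≤ x) (hx₁ : x ≤ 1) :
    Real.exp (-(2 * c * (Real.arctan x / Real.pi) ^ 2)) ≤ Real.exp (-(c * x ^ 2) / 8) := by
  have hsq : (x / 4) ^ 2 ≤ (Real.arctan x / Real.pi) ^ 2 :=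
    pow_le_pow_left₀ (by positivity) (div_four_le_arctan_div_pi hx₀ hx₁) 2
  gcongr
  linarith [mul_le_mul_of_nonneg_left hsq hc]

end Arctan

theorem stmt_5_general (m : ℕ) {γ τ : ℝ} (hγ : 0 < γ) (hτ : 0 ≤ τ) :
    ((Measure.pi fun _ : Fin m => cauchyMeasure γ)
        {X | (m : ℝ) / 2 ≤ (({i | τ < X i} : Finset (Fin m)).card : ℝ) ∨
             (m : ℝ) / 2 ≤ (({i | X i < -τ} : Finset (Fin m)).card : ℝ)}
      ≤ ENNReal.ofReal (2 * Real.exp (-(2 * m * (Real.arctan (τ / γ) / Real.pi) ^ 2)))) ∧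
    ((Measure.pi fun _ : Fin m => cauchyMeasure γ)
        {X | sampleMedian X ∉ Set.Icc (-τ) τ}
      ≤ ENNReal.ofReal (2 * Real.exp (-(2 * m * (Real.arctan (τ / γ) / Real.pi) ^ 2)))) := by
  lift γ to ℝ≥0 using hγ.le
  have hγ₀ : γ ≠ 0 := by exact_mod_cast hγ.ne'
  rw [cauchyMeasure_coe_eq hγ₀]
  have hrate : 0 ≤ Real.arctan (τ / γ) / Real.pi :=
    div_nonneg (Real.arctan_nonneg.mpr (by positivity)) Real.pi_pos.le
  have hupper := (measureReal_cauchyMeasure_Ioi 0 hγ₀ τ).le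
  have hlower := (measureReal_mono Set.Iio_subset_Iic_self).trans_eq
    (measureReal_cauchyMeasure_Iic 0 hγ₀ (-τ))
  rw [sub_zero] at hupper hlower
  rw [neg_div, Real.arctan_neg, neg_div, ← sub_eq_add_neg] at hlower
  have hcount := measure_pi_half_le_card_or_half_le_card_le (ι := Fin m) hrate hlower hupper
  simp only [Fintype.card_fin] at hcount
  exact ⟨hcount, (measure_mono fun _ hX =>
    half_le_card_or_half_le_card_of_sampleMedian_notMem_Icc hX).trans hcount⟩

/-- Lemma 2.8 (non-asymptotic convergence of the Cauchy median): for `X_1, …, X_m`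
i.i.d. standard Cauchy and `0 < τ < 1`, the probability that at least `m/2` of the `X_i`
exceed `τ`, or at least `m/2` of them are below `−τ`, is at most `2·exp(−mτ²/8)`;
in particular the sample median lies outside `[−τ, τ]` with at most this probability. -/
theorem stmt_5 (m : ℕ) (hm : 0 < m) (τ : ℝ) (hτ0 : 0 < τ) (hτ1 : τ < 1) :
    ((Measure.pi fun _ : Fin m => cauchyMeasure 1)
        {X | (m : ℝ) / 2 ≤ (({i | τ < X i} : Finset (Fin m)).card : ℝ) ∨
             (m : ℝ) / 2 ≤ (({i | X i < -τ} : Finset (Fin m)).card : ℝ)}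
      ≤ ENNReal.ofReal (2 * Real.exp (-((m : ℝ) * τ ^ 2) / 8))) ∧
    ((Measure.pi fun _ : Fin m => cauchyMeasure 1)
        {X | sampleMedian X ∉ Set.Icc (-τ) τ}
      ≤ ENNReal.ofReal (2 * Real.exp (-((m : ℝ) * τ ^ 2) / 8))) := by
  have hrate := ENNReal.ofReal_le_ofReal <| mul_le_mul_of_nonneg_left
    (exp_neg_arctan_div_pi_sq_le m.cast_nonneg hτ0.le hτ1.le) zero_le_two
  have hbound := stmt_5_general m one_pos hτ0.le
  rw [div_one] at hbound
  exact hbound.imp (·.trans hrate) (·.trans hrate)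
end

section
/- Consider the node model: M = LLᵀ ∈ ℝ^{p×p} is positive definite, A ∈ ℝ^p, σ_y > 0; the design matrix X ∈ ℝ^{k×p} has rows drawn i.i.d. from the multivariate Gaussian N(0, M); η ∈ ℝ^k has i.i.d. N(0, σ_y²) entries independent of X; the responses are B = XA + η. Let Â = (XᵀX)⁻¹XᵀB be the least-squares solution and Δ = Â − A. Then for any constants 0 < c₁ < 1/2 and c₂ > 0, if k ≥ p/c₁², one has Pr( ‖LᵀΔ‖₂ > 2σ_y c₂√p / ((1 − 2c₁)²√k) ) ≤ exp(−k·c₁²/2) + 2p·exp(−2k) + p·exp(−c₂²/2). Equivalently, since ΔᵀMΔ = ‖LᵀΔ‖₂², Pr( ΔᵀMΔ > 4σ_y²c₂²p/((1 − 2c₁)⁴k) ) is bounded by the same quantity. -/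
open MeasureTheory ProbabilityTheory Matrix

/-- The centered multivariate Gaussian `N(0, LLᵀ)` on `ℝ^p`, realized as the pushforward
of the standard Gaussian product measure under `x ↦ Lx`. -/
noncomputable def mvg0 {p : ℕ} (L : Matrix (Fin p) (Fin p) ℝ) : Measure (Fin p → ℝ) :=
  Measure.map (fun x => L.mulVec x) (Measure.pi fun _ : Fin p => gaussianReal 0 1)

/-- Euclidean norm of a vector in `ℝ^p`. -/
noncomputable def enorm' {p : ℕ} (v : Fin p → ℝ) : ℝ := Real.sqrt (∑ i, v i ^ 2)

/-!
Write `X = G Lᵀ` with `G` standard Gaussian; then `u = LᵀΔ` solves the normal equations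
`GᵀG u = Gᵀη`. Instead of controlling the operator norm of `(GᵀG)⁻¹`, bound `u` coordinatewise.
The component `rᵢ` of the `i`-th column of `G` orthogonal to the other columns satisfies
`⟪rᵢ, η⟫ = uᵢ ‖rᵢ‖²`, and given `G` the left side is `N(0, σ_y² ‖rᵢ‖²)`, so `|uᵢ| ≥ σ_y s` has
conditional probability at most `exp (-s² ‖rᵢ‖² / 2)`. Given the other columns, `‖rᵢ‖²` is
chi-squared with at least `k - p + 1` degrees of freedom, and its Laplace transform yields
`P(|uᵢ| ≥ σ_y s) ≤ (1 + s²) ^ (-(k - p + 1) / 2)`. A union bound over `i` with `s = 2 c / √k` gives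
the claim: the bound is of order `exp (-c² / 2)` for `s² ≤ 2` and exponentially small in `k` for
`s² ≥ 2`.
-/

open Module Submodule
open scoped RealInnerProductSpace NNReal ENNReal

section StarProjection

variable {E : Type*} [NormedAddCommGroup E] [InnerProductSpace ℝ E] (V : Submodule ℝ E)
  [V.HasOrthogonalProjection]

lemma norm_starProjection_orthogonal_lt_iff (x : E) (a : ℝ) :
    ‖Vᗮ.starProjection x‖ < a ↔ ∃ v ∈ V, ‖x - v‖ < a := by
  constructor
  · intro h
    exact ⟨V.starProjection x, starProjection_apply_mem _ _,
      by rwa [← starProjection_orthogonal_val]⟩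
  · rintro ⟨v, hv, hlt⟩
    have hproj : Vᗮ.starProjection (x - v) = Vᗮ.starProjection x := by
      rw [map_sub, starProjection_orthogonal_apply_eq_zero hv, sub_zero]
    exact (hproj ▸ norm_starProjection_apply_le Vᗮ (x - v)).trans_lt hlt

lemma inner_starProjection_starProjection (x y : E) :
    ⟪V.starProjection x, V.starProjection y⟫ = ⟪V.starProjection x, y⟫ := by
  rw [← inner_starProjection_left_eq_right,
    starProjection_eq_self_iff.2 (starProjection_apply_mem V x)]

-- Expressing the inner product through norms of projections makes its joint measurability in `V`,
-- `x` and `y` a consequence of that of the norm.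
lemma inner_starProjection_eq_polarization (x y : E) :
    ⟪V.starProjection x, y⟫ = (‖V.starProjection (x + y)‖ ^ 2 - ‖V.starProjection x‖ ^ 2
      - ‖V.starProjection y‖ ^ 2) / 2 := by
  rw [map_add, norm_add_sq_real, inner_starProjection_starProjection]
  ring

end StarProjection

section RegressionResidual

variable {ι E : Type*} [NormedAddCommGroup E] [InnerProductSpace ℝ E] [FiniteDimensional ℝ E]

/-- The residual of the vector `g i` after regressing it on the other vectors of the family `g`,
i.e. its component orthogonal to all `g j` with `j ≠ i`. -/
noncomputable def regressionResidual (g : ι → E) (i : ι) : E :=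
  (span ℝ (Set.range fun j : {j // j ≠ i} => g j))ᗮ.starProjection (g i)

lemma inner_regressionResidual_of_ne (g : ι → E) {i j : ι} (hj : j ≠ i) :
    ⟪regressionResidual g i, g j⟫ = 0 :=
  inner_left_of_mem_orthogonal (subset_span (Set.mem_range_self (⟨j, hj⟩ : {j // j ≠ i})))
    (starProjection_apply_mem _ _)

lemma inner_regressionResidual_self (g : ι → E) (i : ι) :
    ⟪regressionResidual g i, g i⟫ = ‖regressionResidual g i‖ ^ 2 := by
  rw [← real_inner_self_eq_norm_sq, regressionResidual, inner_starProjection_starProjection]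

lemma inner_regressionResidual_sum_smul [Fintype ι] (g : ι → E) (i : ι) (u : ι → ℝ) :
    ⟪regressionResidual g i, ∑ j, u j • g j⟫ = u i * ‖regressionResidual g i‖ ^ 2 := by
  rw [inner_sum, Finset.sum_eq_single i, inner_smul_right, inner_regressionResidual_self]
  · intro j _ hj
    rw [inner_smul_right, inner_regressionResidual_of_ne g hj, mul_zero]
  · simp

lemma regressionResidual_mem_span (g : ι → E) (i : ι) :
    regressionResidual g i ∈ span ℝ (Set.range g) := by
  rw [regressionResidual, starProjection_orthogonal_val]
  refine sub_mem (subset_span ⟨i, rfl⟩) (span_mono ?_ (starProjection_apply_mem _ _))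
  rintro _ ⟨j, rfl⟩
  exact ⟨j, rfl⟩

lemma linearIndependent_of_regressionResidual_ne_zero [Finite ι] {g : ι → E}
    (hg : ∀ i, regressionResidual g i ≠ 0) : LinearIndependent ℝ g := by
  have := Fintype.ofFinite ι
  refine Fintype.linearIndependent_iff.2 fun u hu i => ?_
  have h := inner_regressionResidual_sum_smul g i u
  rw [hu, inner_zero_right] at h
  simpa [hg i] using h

lemma inner_regressionResidual_of_normal_equations [Fintype ι] {g : ι → E} {u : ι → ℝ} {y : E}
    (hu : ∀ j, ⟪g j, ∑ l, u l • g l⟫ = ⟪g j, y⟫) (i : ι) :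
    ⟪regressionResidual g i, y⟫ = u i * ‖regressionResidual g i‖ ^ 2 := by
  have hspan : span ℝ (Set.range g) ≤ (ℝ ∙ (y - ∑ l, u l • g l))ᗮ := by
    refine span_le.2 ?_
    rintro _ ⟨j, rfl⟩
    rw [SetLike.mem_coe, mem_orthogonal_singleton_iff_inner_left, inner_sub_right, hu, sub_self]
  have horth := mem_orthogonal_singleton_iff_inner_left.1
    (hspan (regressionResidual_mem_span g i))
  rw [← inner_regressionResidual_sum_smul]
  rwa [inner_sub_right, sub_eq_zero] at horth

lemma abs_lt_of_abs_inner_regressionResidual_lt [Fintype ι] {g : ι → E} {u : ι → ℝ} {y : E}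
    {s : ℝ} {i : ι} (hu : ∀ j, ⟪g j, ∑ l, u l • g l⟫ = ⟪g j, y⟫)
    (hi : |⟪regressionResidual g i, y⟫| < s * ‖regressionResidual g i‖ ^ 2) : |u i| < s := by
  rw [inner_regressionResidual_of_normal_equations hu, abs_mul, abs_sq] at hi
  exact lt_of_mul_lt_mul_right hi (sq_nonneg _)

end RegressionResidual

section Measurability

variable {ι E : Type*} [Finite ι] [NormedAddCommGroup E] [InnerProductSpace ℝ E]
  [FiniteDimensional ℝ E]

lemma isOpen_setOf_norm_starProjection_orthogonal_span_lt (a : ℝ) :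
    IsOpen {q : (ι → E) × E | ‖(span ℝ (Set.range q.1))ᗮ.starProjection q.2‖ < a} := by
  have := Fintype.ofFinite ι
  have hunion : {q : (ι → E) × E | ‖(span ℝ (Set.range q.1))ᗮ.starProjection q.2‖ < a} =
      ⋃ c : ι → ℝ, {q | ‖q.2 - ∑ j, c j • q.1 j‖ < a} := by
    ext q
    simp only [Set.mem_ofPred_eq, Set.mem_iUnion, norm_starProjection_orthogonal_lt_iff,
      mem_span_range_iff_exists_fun, exists_exists_eq_and]
  rw [hunion]
  exact isOpen_iUnion fun c => isOpen_lt (by fun_prop) continuous_const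

variable [MeasurableSpace E] [BorelSpace E]

lemma measurable_norm_starProjection_orthogonal_span :
    Measurable fun q : (ι → E) × E => ‖(span ℝ (Set.range q.1))ᗮ.starProjection q.2‖ :=
  measurable_of_Iio fun a =>
    (isOpen_setOf_norm_starProjection_orthogonal_span_lt a).measurableSet

lemma measurable_norm_regressionResidual (i : ι) :
    Measurable fun g : ι → E => ‖regressionResidual g i‖ :=
  measurable_norm_starProjection_orthogonal_span.comp
    (f := fun g : ι → E => (fun j : {j // j ≠ i} => g j, g i)) (by fun_prop)

lemma measurable_inner_regressionResidual (i : ι) :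
    Measurable fun q : (ι → E) × E => ⟪regressionResidual q.1 i, q.2⟫ := by
  simp only [regressionResidual, inner_starProjection_eq_polarization]
  have hnorm {f : (ι → E) × E → E} (hf : Measurable f) : Measurable fun q =>
      ‖(span ℝ (Set.range fun j : {j // j ≠ i} => q.1 j))ᗮ.starProjection (f q)‖ :=
    measurable_norm_starProjection_orthogonal_span.comp
      (f := fun q : (ι → E) × E => (fun j : {j // j ≠ i} => q.1 j, f q)) (by fun_prop)
  exact (((hnorm (by fun_prop)).pow_const 2).sub ((hnorm (by fun_prop)).pow_const 2)).sub
    ((hnorm (by fun_prop)).pow_const 2) |>.div_const 2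

end Measurability

section GaussianReal

lemma gaussianPDF_neg_le_mul_gaussianPDF_zero (v : ℝ≥0) {t x : ℝ} (ht : 0 ≤ t) (hx : 0 ≤ x) :
    gaussianPDF (-t) v x ≤
      ENNReal.ofReal (Real.exp (-t ^ 2 / (2 * v))) * gaussianPDF 0 v x := by
  rw [gaussianPDF, gaussianPDF, ← ENNReal.ofReal_mul (Real.exp_pos _).le]
  refine ENNReal.ofReal_le_ofReal ?_
  rw [gaussianPDFReal, gaussianPDFReal, mul_left_comm, ← Real.exp_add, ← add_div]
  gcongr
  nlinarith [mul_nonneg ht hx]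

-- Keeping the half-line probability on the right makes the two-sided tail bound free of a factor 2.
lemma gaussianReal_Ici_le (v : ℝ≥0) {t : ℝ} (ht : 0 ≤ t) :
    gaussianReal 0 v (Set.Ici t) ≤
      ENNReal.ofReal (Real.exp (-t ^ 2 / (2 * v))) * gaussianReal 0 v (Set.Ici 0) := by
  rcases eq_or_ne v 0 with rfl | hv
  · simpa using measure_mono (μ := gaussianReal 0 0) (Set.Ici_subset_Ici.2 ht)
  have hshift : gaussianReal 0 v (Set.Ici t) = gaussianReal (-t) v (Set.Ici 0) := by
    rw [← zero_add (-t), ← gaussianReal_map_add_const,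
      Measure.map_apply (by fun_prop) measurableSet_Ici]
    simp
  rw [hshift, gaussianReal_apply _ hv, gaussianReal_apply _ hv,
    ← lintegral_const_mul _ (measurable_gaussianPDF _ _)]
  exact setLIntegral_mono (by fun_prop) fun x hx => gaussianPDF_neg_le_mul_gaussianPDF_zero v ht hx

lemma gaussianReal_zero_neg (v : ℝ≥0) (s : Set ℝ) : gaussianReal 0 v (-s) = gaussianReal 0 v s := by
  conv_rhs => rw [← neg_zero, ← gaussianReal_map_neg]
  exact ((MeasurableEquiv.neg ℝ).map_apply s).symm

lemma gaussianReal_le_abs_le (v : ℝ≥0) {t : ℝ} (ht : 0 ≤ t) :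
    gaussianReal 0 v {x | t ≤ |x|} ≤ ENNReal.ofReal (Real.exp (-t ^ 2 / (2 * v))) := by
  rcases eq_or_ne v 0 with rfl | hv
  · simpa using prob_le_one (μ := gaussianReal 0 0)
  have := nullSingletonClass_gaussianReal (μ := 0) hv
  have htails : {x : ℝ | t ≤ |x|} = Set.Ici t ∪ -Set.Ici t := by
    ext x
    simp [le_abs, le_neg]
  have hhalf : gaussianReal 0 v (Set.Ici 0) + gaussianReal 0 v (Set.Ici 0) = 1 := by
    nth_rw 2 [← gaussianReal_zero_neg]
    rw [← prob_add_prob_compl (μ := gaussianReal 0 v) (measurableSet_Ici (a := (0 : ℝ))),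
      Set.compl_Ici, Set.neg_Ici, neg_zero, measure_congr Iio_ae_eq_Iic]
  calc gaussianReal 0 v {x | t ≤ |x|}
      ≤ gaussianReal 0 v (Set.Ici t) + gaussianReal 0 v (-Set.Ici t) :=
        htails ▸ measure_union_le _ _
    _ = gaussianReal 0 v (Set.Ici t) + gaussianReal 0 v (Set.Ici t) := by
        rw [gaussianReal_zero_neg]
    _ ≤ ENNReal.ofReal (Real.exp (-t ^ 2 / (2 * v))) *
        (gaussianReal 0 v (Set.Ici 0) + gaussianReal 0 v (Set.Ici 0)) := by
        rw [mul_add]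
        gcongr <;> exact gaussianReal_Ici_le v ht
    _ = ENNReal.ofReal (Real.exp (-t ^ 2 / (2 * v))) := by rw [hhalf, mul_one]

lemma integral_exp_neg_mul_sq_gaussianReal (θ : ℝ) :
    ∫ x, Real.exp (-θ * x ^ 2) ∂gaussianReal 0 1 = (√(1 + 2 * θ))⁻¹ := by
  have hdensity (x : ℝ) : gaussianPDFReal 0 1 x • Real.exp (-θ * x ^ 2) =
      (√(2 * Real.pi))⁻¹ * Real.exp (-(θ + 1 / 2) * x ^ 2) := by
    rw [gaussianPDFReal, smul_eq_mul, mul_assoc, ← Real.exp_add]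
    simp only [NNReal.coe_one, mul_one, sub_zero]
    congr 2
    ring
  simp_rw [integral_gaussianReal_eq_integral_smul one_ne_zero, hdensity]
  rw [integral_const_mul, integral_gaussian, ← Real.sqrt_inv, ← Real.sqrt_mul (by positivity),
    ← Real.sqrt_inv]
  congr 1
  have := Real.pi_pos
  field_simp
  ring_nf

end GaussianReal

section StdGaussian

variable {E : Type*} [NormedAddCommGroup E] [InnerProductSpace ℝ E] [FiniteDimensional ℝ E]
  [MeasurableSpace E] [BorelSpace E]

lemma map_inner_stdGaussian (a : E) :
    (stdGaussian E).map (fun y => ⟪a, y⟫) = gaussianReal 0 (‖a‖₊ ^ 2) := by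
  have h := IsGaussian.map_eq_gaussianReal (μ := stdGaussian E) (innerSL ℝ a)
  rw [variance_dual_stdGaussian, integral_strongDual_stdGaussian, innerSL_apply_norm] at h
  rwa [Real.toNNReal_pow (norm_nonneg a), norm_toNNReal] at h

lemma stdGaussian_mul_norm_sq_le_abs_inner_le (a : E) {s : ℝ} (hs : 0 ≤ s) :
    stdGaussian E {y | s * ‖a‖ ^ 2 ≤ |⟪a, y⟫|} ≤
      ENNReal.ofReal (Real.exp (-(s ^ 2 / 2) * ‖a‖ ^ 2)) := by
  rcases eq_or_ne a 0 with rfl | ha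
  · simp
  have hmeas : MeasurableSet {x : ℝ | s * ‖a‖ ^ 2 ≤ |x|} :=
    measurableSet_le (by fun_prop) (by fun_prop)
  calc stdGaussian E {y | s * ‖a‖ ^ 2 ≤ |⟪a, y⟫|}
      = gaussianReal 0 (‖a‖₊ ^ 2) {x | s * ‖a‖ ^ 2 ≤ |x|} := by
        rw [← map_inner_stdGaussian, Measure.map_apply (by fun_prop) hmeas, Set.preimage_ofPred_eq]
    _ ≤ ENNReal.ofReal (Real.exp (-(s * ‖a‖ ^ 2) ^ 2 / (2 * (‖a‖₊ ^ 2 : ℝ≥0)))) :=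
        gaussianReal_le_abs_le _ (by positivity)
    _ = ENNReal.ofReal (Real.exp (-(s ^ 2 / 2) * ‖a‖ ^ 2)) := by
        have := norm_ne_zero_iff.2 ha
        push_cast
        congr 2
        field_simp

lemma integral_exp_neg_mul_norm_sq_stdGaussian (θ : ℝ) :
    ∫ x : E, Real.exp (-θ * ‖x‖ ^ 2) ∂stdGaussian E = (√(1 + 2 * θ))⁻¹ ^ finrank ℝ E := by
  let b := stdOrthonormalBasis ℝ E
  have hprod (x : Fin (finrank ℝ E) → ℝ) :
      Real.exp (-θ * ‖∑ i, x i • b i‖ ^ 2) = ∏ i, Real.exp (-θ * x i ^ 2) := by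
    rw [← Real.exp_sum, ← Finset.mul_sum, ← real_inner_self_eq_norm_sq, b.orthonormal.inner_sum]
    simp only [conj_trivial, sq]
  rw [stdGaussian_eq_map_pi_orthonormalBasis b,
    integral_map (Measurable.aemeasurable (by fun_prop)) (by fun_prop)]
  simp_rw [hprod]
  rw [integral_fintype_prod_eq_pow (fun x : ℝ => Real.exp (-θ * x ^ 2)),
    integral_exp_neg_mul_sq_gaussianReal, Fintype.card_fin]

lemma lintegral_exp_neg_mul_norm_sq_stdGaussian {θ : ℝ} (hθ : 0 ≤ θ) :
    ∫⁻ x : E, ENNReal.ofReal (Real.exp (-θ * ‖x‖ ^ 2)) ∂stdGaussian E =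
      ENNReal.ofReal ((√(1 + 2 * θ))⁻¹ ^ finrank ℝ E) := by
  rw [← integral_exp_neg_mul_norm_sq_stdGaussian,
    ofReal_integral_eq_lintegral_ofReal]
  · refine Integrable.of_bound (by fun_prop) 1 (.of_forall fun x => ?_)
    rw [Real.norm_of_nonneg (Real.exp_pos _).le, Real.exp_le_one_iff, neg_mul]
    exact neg_nonpos.2 (by positivity)
  · exact .of_forall fun x => (Real.exp_pos _).le

lemma map_orthogonalProjectionOnto_stdGaussian (V : Submodule ℝ E) :
    (stdGaussian E).map V.orthogonalProjectionOnto = stdGaussian V := by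
  have : IsProbabilityMeasure ((stdGaussian E).map V.orthogonalProjectionOnto) :=
    Measure.isProbabilityMeasure_map (by fun_prop)
  refine Measure.ext_of_charFun (funext fun t => ?_)
  rw [charFun_stdGaussian, charFun_apply, integral_map (by fun_prop) (by fun_prop)]
  simp_rw [inner_orthogonalProjectionOnto_eq_of_mem_right]
  rw [← charFun_apply, charFun_stdGaussian, norm_coe]

lemma lintegral_exp_neg_mul_norm_starProjection_sq_stdGaussian (V : Submodule ℝ E) {θ : ℝ}
    (hθ : 0 ≤ θ) :
    ∫⁻ y, ENNReal.ofReal (Real.exp (-θ * ‖V.starProjection y‖ ^ 2)) ∂stdGaussian E =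
      ENNReal.ofReal ((√(1 + 2 * θ))⁻¹ ^ finrank ℝ V) := by
  rw [← lintegral_exp_neg_mul_norm_sq_stdGaussian hθ, ← map_orthogonalProjectionOnto_stdGaussian,
    lintegral_map (by fun_prop) (by fun_prop)]
  rfl

end StdGaussian

section GaussianDesign

lemma lintegral_pi_le_of_forall_lintegral_update_le {ι : Type*} [Fintype ι] [DecidableEq ι]
    {X : ι → Type*} [∀ j, MeasurableSpace (X j)] {μ : ∀ j, Measure (X j)}
    [∀ j, IsProbabilityMeasure (μ j)] {F : (∀ j, X j) → ℝ≥0∞} (hF : Measurable F) (i : ι)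
    {K : ℝ≥0∞} (hK : ∀ x, ∫⁻ y, F (Function.update x i y) ∂μ i ≤ K) :
    ∫⁻ x, F x ∂Measure.pi μ ≤ K := by
  have hne (j : ι) : Nonempty (X j) := nonempty_of_isProbabilityMeasure (μ j)
  rw [lintegral_eq_lmarginal_univ fun j => (hne j).some, lmarginal_erase' _ hF (Finset.mem_univ i)]
  refine (lmarginal_mono hK _).trans (lintegral_const K |>.trans ?_).le
  rw [measure_univ, mul_one]

variable {ι E : Type*} [Fintype ι] [NormedAddCommGroup E] [InnerProductSpace ℝ E]
  [FiniteDimensional ℝ E]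

lemma finrank_sub_card_le_finrank_orthogonal_span (h : ι → E) :
    finrank ℝ E - Fintype.card ι ≤ finrank ℝ (span ℝ (Set.range h))ᗮ := by
  have hle : finrank ℝ (span ℝ (Set.range h)) ≤ Fintype.card ι := finrank_range_le_card h
  have hadd := finrank_add_finrank_orthogonal (span ℝ (Set.range h))
  lia

variable [MeasurableSpace E] [BorelSpace E]

lemma lintegral_exp_neg_mul_norm_regressionResidual_sq_le {θ : ℝ} (hθ : 0 ≤ θ) (i : ι) :
    ∫⁻ g, ENNReal.ofReal (Real.exp (-θ * ‖regressionResidual g i‖ ^ 2))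
        ∂Measure.pi (fun _ : ι => stdGaussian E) ≤
      ENNReal.ofReal ((√(1 + 2 * θ))⁻¹ ^ (finrank ℝ E - (Fintype.card ι - 1))) := by
  classical
  have hmeas := measurable_norm_regressionResidual (E := E) i
  refine lintegral_pi_le_of_forall_lintegral_update_le (by fun_prop) i fun g => ?_
  let others : Submodule ℝ E := span ℝ (Set.range fun j : {j // j ≠ i} => g j)
  have hresidual (y : E) :
      regressionResidual (Function.update g i y) i = othersᗮ.starProjection y := by
    have hrange (j : {j // j ≠ i}) : Function.update g i y j = g j :=
      Function.update_of_ne j.2 y g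
    simp only [regressionResidual, hrange, Function.update_self, others]
  have hdim : finrank ℝ E - (Fintype.card ι - 1) ≤ finrank ℝ othersᗮ := by
    simpa using finrank_sub_card_le_finrank_orthogonal_span fun j : {j // j ≠ i} => g j
  simp_rw [hresidual, lintegral_exp_neg_mul_norm_starProjection_sq_stdGaussian _ hθ]
  refine ENNReal.ofReal_le_ofReal (pow_le_pow_of_le_one (by positivity) ?_ hdim)
  exact inv_le_one_of_one_le₀ (Real.one_le_sqrt.2 (by linarith))

lemma prob_mul_norm_regressionResidual_sq_le_abs_inner_le {s : ℝ} (hs : 0 ≤ s) (i : ι) :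
    ((Measure.pi fun _ : ι => stdGaussian E).prod (stdGaussian E))
        {ω | s * ‖regressionResidual ω.1 i‖ ^ 2 ≤ |⟪regressionResidual ω.1 i, ω.2⟫|} ≤
      ENNReal.ofReal ((√(1 + s ^ 2))⁻¹ ^ (finrank ℝ E - (Fintype.card ι - 1))) := by
  have hmeas : MeasurableSet {ω : (ι → E) × E |
      s * ‖regressionResidual ω.1 i‖ ^ 2 ≤ |⟪regressionResidual ω.1 i, ω.2⟫|} := by
    have hnorm : Measurable fun ω : (ι → E) × E => ‖regressionResidual ω.1 i‖ :=
      (measurable_norm_regressionResidual i).comp measurable_fst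
    exact measurableSet_le ((hnorm.pow_const 2).const_mul s)
      (measurable_inner_regressionResidual i).abs
  rw [Measure.prod_apply hmeas]
  calc ∫⁻ g, stdGaussian E
          {y | s * ‖regressionResidual g i‖ ^ 2 ≤ |⟪regressionResidual g i, y⟫|}
          ∂Measure.pi (fun _ : ι => stdGaussian E)
      ≤ ∫⁻ g, ENNReal.ofReal (Real.exp (-(s ^ 2 / 2) * ‖regressionResidual g i‖ ^ 2))
          ∂Measure.pi (fun _ : ι => stdGaussian E) :=
        lintegral_mono fun g => stdGaussian_mul_norm_sq_le_abs_inner_le _ hs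
    _ ≤ ENNReal.ofReal ((√(1 + s ^ 2))⁻¹ ^ (finrank ℝ E - (Fintype.card ι - 1))) := by
        have h := lintegral_exp_neg_mul_norm_regressionResidual_sq_le (E := E)
          (by positivity : 0 ≤ s ^ 2 / 2) i
        rwa [mul_div_cancel₀ _ two_ne_zero] at h

lemma prob_exists_mul_norm_regressionResidual_sq_le_abs_inner_le {s : ℝ} (hs : 0 ≤ s) :
    ((Measure.pi fun _ : ι => stdGaussian E).prod (stdGaussian E))
        {ω | ∃ i, s * ‖regressionResidual ω.1 i‖ ^ 2 ≤ |⟪regressionResidual ω.1 i, ω.2⟫|} ≤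
      ENNReal.ofReal
        (Fintype.card ι * (√(1 + s ^ 2))⁻¹ ^ (finrank ℝ E - (Fintype.card ι - 1))) := by
  rw [Set.ofPred_exists, ENNReal.ofReal_mul (Nat.cast_nonneg _), ENNReal.ofReal_natCast]
  refine (measure_iUnion_fintype_le _ _).trans ?_
  refine (Finset.sum_le_card_nsmul _ _ _ fun i _ =>
    prob_mul_norm_regressionResidual_sq_le_abs_inner_le hs i).trans_eq ?_
  rw [nsmul_eq_mul, Finset.card_univ]

end GaussianDesign

section Whitening

variable {ι κ : Type*}

lemma measurePreserving_curry_pi [Fintype ι] [Fintype κ] {X : Type*} [MeasurableSpace X]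
    (μ : ι → κ → Measure X) [∀ i j, IsProbabilityMeasure (μ i j)] :
    MeasurePreserving (MeasurableEquiv.curry ι κ X) (Measure.pi fun q : ι × κ => μ q.1 q.2)
      (Measure.pi fun i => Measure.pi (μ i)) := by
  refine ⟨MeasurableEquiv.measurable _, ?_⟩
  simpa only [Measure.infinitePi_eq_pi] using Measure.infinitePi_map_curry μ

lemma measurePreserving_swap_pi [Fintype ι] [Fintype κ] {X : Type*} [MeasurableSpace X]
    (μ : ι → κ → Measure X) [∀ i j, IsProbabilityMeasure (μ i j)] :
    MeasurePreserving (Function.swap : (ι → κ → X) → κ → ι → X)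
      (Measure.pi fun i => Measure.pi (μ i)) (Measure.pi fun j => Measure.pi fun i => μ i j) :=
  (measurePreserving_curry_pi fun j i => μ i j).comp <|
    (measurePreserving_piCongrLeft (fun q : κ × ι => μ q.2 q.1) (Equiv.prodComm ι κ)).comp <|
      (measurePreserving_curry_pi μ).symm

lemma measurePreserving_toLp_stdGaussian [Fintype κ] :
    MeasurePreserving (WithLp.toLp 2) (Measure.pi fun _ : κ => gaussianReal 0 1)
      (stdGaussian (EuclideanSpace ℝ κ)) :=
  ⟨by fun_prop, map_pi_eq_stdGaussian⟩

lemma measurePreserving_inv_mul_gaussianReal {σ : ℝ} (hσ : σ ≠ 0) :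
    MeasurePreserving (σ⁻¹ * ·) (gaussianReal 0 (σ ^ 2).toNNReal) (gaussianReal 0 1) := by
  refine ⟨by fun_prop, ?_⟩
  rw [gaussianReal_map_const_mul, mul_zero]
  congr 1
  ext
  simp [max_eq_left (sq_nonneg σ), hσ]

lemma measurePreserving_toLp_inv_smul_stdGaussian [Fintype κ] {σ : ℝ} (hσ : σ ≠ 0) :
    MeasurePreserving (fun η : κ → ℝ => WithLp.toLp 2 (σ⁻¹ • η))
      (Measure.pi fun _ => gaussianReal 0 (σ ^ 2).toNNReal) (stdGaussian (EuclideanSpace ℝ κ)) :=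
  measurePreserving_toLp_stdGaussian.comp
    (measurePreserving_pi _ _ fun _ => measurePreserving_inv_mul_gaussianReal hσ)

lemma measurePreserving_inv_mulVec_mvg0 {p : ℕ} {L : Matrix (Fin p) (Fin p) ℝ}
    (hL : IsUnit L.det) :
    MeasurePreserving (L⁻¹ *ᵥ ·) (mvg0 L) (Measure.pi fun _ => gaussianReal 0 1) := by
  refine ⟨by fun_prop, ?_⟩
  rw [mvg0, Measure.map_map (by fun_prop) (by fun_prop)]
  convert Measure.map_id
  ext x
  simp [nonsing_inv_mul L hL]

/-- The columns of a matrix as vectors of Euclidean space. -/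
noncomputable def euclideanCol (G : Matrix κ ι ℝ) (j : ι) : EuclideanSpace ℝ κ :=
  WithLp.toLp 2 (G.col j)

lemma measurePreserving_euclideanCol_whiten {p k : ℕ} {L : Matrix (Fin p) (Fin p) ℝ}
    (hL : IsUnit L.det) :
    MeasurePreserving (fun X : Fin k → Fin p → ℝ => euclideanCol (of X * L⁻¹ᵀ))
      (Measure.pi fun _ => mvg0 L)
      (Measure.pi fun _ => stdGaussian (EuclideanSpace ℝ (Fin k))) := by
  have : IsProbabilityMeasure (mvg0 L) := Measure.isProbabilityMeasure_map (by fun_prop)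
  have h := (measurePreserving_pi _ _ fun _ : Fin p => measurePreserving_toLp_stdGaussian).comp <|
    (measurePreserving_swap_pi fun (_ : Fin k) (_ : Fin p) => gaussianReal 0 1).comp <|
      measurePreserving_pi _ _ fun _ => measurePreserving_inv_mulVec_mvg0 hL
  convert h using 1
  ext X j r
  simp [euclideanCol, Function.swap, mul_apply, mulVec, dotProduct, mul_comm]

end Whitening

section LeastSquares

/-- The least-squares solution `(XᵀX)⁻¹XᵀB` of `X *ᵥ A = B`; the inverse, hence the solution, is `0`
when `XᵀX` is singular. -/
noncomputable def leastSquares {m n : Type*} [Fintype m] [Fintype n] [DecidableEq n]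
    (X : Matrix m n ℝ) (B : m → ℝ) : n → ℝ :=
  (Xᵀ * X)⁻¹ *ᵥ (Xᵀ *ᵥ B)

variable {m n : Type*}

lemma sum_smul_euclideanCol [Fintype n] (G : Matrix m n ℝ) (u : n → ℝ) :
    ∑ j, u j • euclideanCol G j = WithLp.toLp 2 (G *ᵥ u) := by
  ext r
  simp [euclideanCol, mulVec, dotProduct, mul_comm]

lemma inner_euclideanCol [Fintype m] (G : Matrix m n ℝ) (j : n) (y : m → ℝ) :
    ⟪euclideanCol G j, WithLp.toLp 2 y⟫ = (Gᵀ *ᵥ y) j := by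
  simp [euclideanCol, EuclideanSpace.inner_eq_star_dotProduct, mulVec, dotProduct, mul_comm]

variable [Fintype m] [Fintype n] [DecidableEq n]

lemma isUnit_det_transpose_mul_self_of_linearIndependent {G : Matrix m n ℝ}
    (hG : LinearIndependent ℝ (euclideanCol G)) : IsUnit (Gᵀ * G).det := by
  have hcol : LinearIndependent ℝ G.col :=
    hG.map' (WithLp.linearEquiv 2 ℝ (m → ℝ)).toLinearMap (LinearEquiv.ker _)
  rw [← conjTranspose_eq_transpose_of_trivial]
  exact (PosDef.conjTranspose_mul_self G (mulVec_injective_iff.2 hcol)).det_pos.ne'.isUnit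

lemma transpose_mul_self_mulVec_leastSquares_sub {X : Matrix m n ℝ} (hX : IsUnit (Xᵀ * X).det)
    (A : n → ℝ) (η : m → ℝ) :
    (Xᵀ * X) *ᵥ (leastSquares X (X *ᵥ A + η) - A) = Xᵀ *ᵥ η := by
  rw [leastSquares, mulVec_sub, mulVec_mulVec, mul_nonsing_inv _ hX, one_mulVec, mulVec_add,
    mulVec_mulVec, add_sub_cancel_left]

variable {L : Matrix n n ℝ}

lemma transpose_mul_self_whiten (hL : IsUnit L.det) (X : Matrix m n ℝ) :
    (X * L⁻¹ᵀ)ᵀ * (X * L⁻¹ᵀ) * Lᵀ = L⁻¹ * (Xᵀ * X) := by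
  have hinv : L⁻¹ᵀ * Lᵀ = 1 := by rw [← transpose_mul, mul_nonsing_inv L hL, transpose_one]
  rw [transpose_mul, transpose_transpose, Matrix.mul_assoc, Matrix.mul_assoc X, hinv,
    Matrix.mul_one, Matrix.mul_assoc]

lemma whiten_normal_equations (hL : IsUnit L.det) {X : Matrix m n ℝ}
    (hG : IsUnit ((X * L⁻¹ᵀ)ᵀ * (X * L⁻¹ᵀ)).det) (A : n → ℝ) (η : m → ℝ) :
    (X * L⁻¹ᵀ)ᵀ *ᵥ ((X * L⁻¹ᵀ) *ᵥ (Lᵀ *ᵥ (leastSquares X (X *ᵥ A + η) - A))) =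
      (X * L⁻¹ᵀ)ᵀ *ᵥ η := by
  have hX : IsUnit (Xᵀ * X).det := by
    have hdet := congrArg det (transpose_mul_self_whiten hL X)
    rw [det_mul, det_mul, det_transpose] at hdet
    exact isUnit_of_mul_isUnit_right (hdet ▸ hG.mul hL)
  rw [mulVec_mulVec, mulVec_mulVec, transpose_mul_self_whiten hL, ← mulVec_mulVec,
    transpose_mul_self_mulVec_leastSquares_sub hX, mulVec_mulVec, transpose_mul,
    transpose_transpose]

lemma abs_whitened_leastSquares_error_lt (hL : IsUnit L.det) {X : Matrix m n ℝ} {A : n → ℝ}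
    {η : m → ℝ} {t : ℝ}
    (ht : ∀ i, |⟪regressionResidual (euclideanCol (X * L⁻¹ᵀ)) i, WithLp.toLp 2 η⟫| <
      t * ‖regressionResidual (euclideanCol (X * L⁻¹ᵀ)) i‖ ^ 2) (i : n) :
    |(Lᵀ *ᵥ (leastSquares X (X *ᵥ A + η) - A)) i| < t := by
  have hindep : LinearIndependent ℝ (euclideanCol (X * L⁻¹ᵀ)) :=
    linearIndependent_of_regressionResidual_ne_zero fun i hi => by simpa [hi] using ht i
  have hnormal := whiten_normal_equations hL
    (isUnit_det_transpose_mul_self_of_linearIndependent hindep) A η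
  refine abs_lt_of_abs_inner_regressionResidual_lt (fun j => ?_) (ht i)
  rw [sum_smul_euclideanCol, inner_euclideanCol, inner_euclideanCol, hnormal]

lemma enorm'_le_mul_sqrt {p : ℕ} {v : Fin p → ℝ} {t : ℝ} (ht : 0 ≤ t) (hv : ∀ i, |v i| ≤ t) :
    enorm' v ≤ t * √p := by
  refine Real.sqrt_le_iff.2 ⟨by positivity, ?_⟩
  calc ∑ i, v i ^ 2 ≤ ∑ _i : Fin p, t ^ 2 :=
        Finset.sum_le_sum fun i _ => sq_le_sq' (neg_le_of_abs_le (hv i)) (le_of_abs_le (hv i))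
    _ = (t * √p) ^ 2 := by
        rw [mul_pow, Real.sq_sqrt (Nat.cast_nonneg p)]
        simp [mul_comm]

end LeastSquares

section Numerics

lemma inv_sqrt_one_add_pow_eq_exp {w : ℝ} (hw : 0 ≤ w) (n : ℕ) :
    (√(1 + w))⁻¹ ^ n = Real.exp (-(n / 2 * Real.log (1 + w))) := by
  have hpos : 0 < 1 + w := by positivity
  rw [← Real.exp_log (inv_pos.2 (Real.sqrt_pos.2 hpos)), ← Real.exp_nat_mul, Real.log_inv,
    Real.log_sqrt hpos.le]
  ring_nf

lemma div_three_le_log_one_add {w : ℝ} (hw : 0 ≤ w) (hw2 : w ≤ 2) : w / 3 ≤ Real.log (1 + w) :=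
  calc w / 3 ≤ w / (1 + w) := by gcongr; linarith
    _ = 1 - (1 + w)⁻¹ := by field_simp; ring
    _ ≤ Real.log (1 + w) := Real.one_sub_inv_le_log_of_pos (by positivity)

lemma one_le_log_one_add {w : ℝ} (hw : 2 ≤ w) : 1 ≤ Real.log (1 + w) := by
  rw [Real.le_log_iff_exp_le (by positivity)]
  linarith [Real.exp_one_lt_three]

lemma inv_sqrt_one_add_pow_le_exp_of_le_two {w : ℝ} (hw : 0 ≤ w) (hw2 : w ≤ 2) (n : ℕ) :
    (√(1 + w))⁻¹ ^ n ≤ Real.exp (-(n * w / 6)) := by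
  rw [inv_sqrt_one_add_pow_eq_exp hw, Real.exp_le_exp, neg_le_neg_iff]
  calc n * w / 6 = n / 2 * (w / 3) := by ring
    _ ≤ n / 2 * Real.log (1 + w) := by
        gcongr
        exact div_three_le_log_one_add hw hw2

lemma inv_sqrt_one_add_pow_le_exp_of_two_le {w : ℝ} (hw : 2 ≤ w) (n : ℕ) :
    (√(1 + w))⁻¹ ^ n ≤ Real.exp (-(n / 2)) := by
  rw [inv_sqrt_one_add_pow_eq_exp (by positivity), Real.exp_le_exp, neg_le_neg_iff]
  exact le_mul_of_one_le_right (by positivity) (one_le_log_one_add hw)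

lemma mul_inv_sqrt_one_add_pow_le {p k n : ℕ} (hp : 4 * p ≤ k) (hn : 3 * k ≤ 4 * n) {w : ℝ}
    (hw : 0 ≤ w) :
    p * (√(1 + w))⁻¹ ^ n ≤ Real.exp (-k / 8) + p * Real.exp (-(k * w / 8)) := by
  have hp' : 4 * (p : ℝ) ≤ k := mod_cast hp
  have hn' : 3 * (k : ℝ) ≤ 4 * n := mod_cast hn
  rcases le_total w 2 with hw2 | hw2
  · have hexp : Real.exp (-(n * w / 6)) ≤ Real.exp (-(k * w / 8)) := by
      refine Real.exp_le_exp.2 ?_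
      linarith [mul_le_mul_of_nonneg_right hn' hw]
    calc p * (√(1 + w))⁻¹ ^ n ≤ p * Real.exp (-(k * w / 8)) := by
          gcongr
          exact (inv_sqrt_one_add_pow_le_exp_of_le_two hw hw2 n).trans hexp
      _ ≤ _ := le_add_of_nonneg_left (Real.exp_pos _).le
  · have hp_exp : (p : ℝ) ≤ Real.exp (k / 4) := by linarith [Real.add_one_le_exp ((k : ℝ) / 4)]
    calc p * (√(1 + w))⁻¹ ^ n ≤ Real.exp (k / 4) * Real.exp (-(n / 2)) := by
          gcongr
          exact inv_sqrt_one_add_pow_le_exp_of_two_le hw2 n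
      _ ≤ Real.exp (-k / 8) := by
          rw [← Real.exp_add]
          exact Real.exp_le_exp.2 (by linarith)
      _ ≤ _ := le_add_of_nonneg_right (by positivity)

end Numerics

section MainTheorem

lemma isUnit_det_of_posDef_mul_transpose {n : Type*} [Fintype n] [DecidableEq n]
    {L : Matrix n n ℝ} (hM : (L * Lᵀ).PosDef) : IsUnit L.det := by
  have hdet := hM.det_pos
  rw [det_mul] at hdet
  exact (left_ne_zero_of_mul hdet.ne').isUnit

variable {p k : ℕ} {L : Matrix (Fin p) (Fin p) ℝ} {σy : ℝ}

lemma prob_mul_sqrt_lt_enorm'_leastSquares_le (hM : (L * Lᵀ).PosDef) (A : Fin p → ℝ)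
    (hσy : 0 < σy) {s : ℝ} (hs : 0 ≤ s) :
    ((Measure.pi fun _ : Fin k => mvg0 L).prod
        (Measure.pi fun _ : Fin k => gaussianReal 0 ((σy ^ 2).toNNReal)))
      {ω | σy * s * √p < enorm' (Lᵀ *ᵥ (leastSquares (of ω.1) (of ω.1 *ᵥ A + ω.2) - A))}
      ≤ ENNReal.ofReal (p * (√(1 + s ^ 2))⁻¹ ^ (k - (p - 1))) := by
  have hL := isUnit_det_of_posDef_mul_transpose hM
  have : IsProbabilityMeasure (mvg0 L) := Measure.isProbabilityMeasure_map (by fun_prop)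
  have hwhiten := (measurePreserving_euclideanCol_whiten (k := k) hL).prod
    (measurePreserving_toLp_inv_smul_stdGaussian (κ := Fin k) hσy.ne')
  have hprob := prob_exists_mul_norm_regressionResidual_sq_le_abs_inner_le
    (ι := Fin p) (E := EuclideanSpace ℝ (Fin k)) hs
  rw [Fintype.card_fin, finrank_euclideanSpace_fin] at hprob
  refine le_trans (measure_mono fun ω hω => ?_) ((hwhiten.measure_preimage_le _).trans hprob)
  simp only [Set.mem_preimage, Set.mem_ofPred_eq, Prod.map_fst, Prod.map_snd]
  contrapose! hω
  rw [Set.mem_ofPred_eq, not_lt]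
  refine enorm'_le_mul_sqrt (by positivity) fun i =>
    (abs_whitened_leastSquares_error_lt hL (fun j => ?_) i).le
  have hj := hω j
  rw [WithLp.toLp_smul, inner_smul_right, abs_mul, abs_of_pos (inv_pos.2 hσy),
    inv_mul_lt_iff₀ hσy] at hj
  rwa [mul_assoc]

theorem stmt_6_general (p k : ℕ) (L : Matrix (Fin p) (Fin p) ℝ) (hM : (L * Lᵀ).PosDef)
    (A : Fin p → ℝ) (σy : ℝ) (hσy : 0 < σy) (c : ℝ) (hc : 0 ≤ c) (hk : 4 * p ≤ k) :
    ((Measure.pi fun _ : Fin k => mvg0 L).prod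
        (Measure.pi fun _ : Fin k => gaussianReal 0 ((σy ^ 2).toNNReal)))
      {ω | 2 * σy * c * √p / √k <
        enorm' (Lᵀ *ᵥ (leastSquares (of ω.1) (of ω.1 *ᵥ A + ω.2) - A))}
      ≤ ENNReal.ofReal (Real.exp (-k / 8) + p * Real.exp (-c ^ 2 / 2)) := by
  rcases Nat.eq_zero_or_pos p with rfl | hp
  · simp [enorm']
  have hk_pos : (0 : ℝ) < k := mod_cast (by lia : 0 < k)
  have hdeviation := prob_mul_sqrt_lt_enorm'_leastSquares_le (k := k) hM A hσy
    (by positivity : 0 ≤ 2 * c / √k)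
  have hnumerics := mul_inv_sqrt_one_add_pow_le (n := k - (p - 1)) hk (by lia)
    (sq_nonneg (2 * c / √k))
  have hthreshold : σy * (2 * c / √k) * √p = 2 * σy * c * √p / √k := by ring
  have hexponent : -(k * (2 * c / √k) ^ 2 / 8) = -c ^ 2 / 2 := by
    rw [div_pow, Real.sq_sqrt hk_pos.le]
    field_simp
    ring
  rw [hthreshold] at hdeviation
  rw [hexponent] at hnumerics
  exact hdeviation.trans (ENNReal.ofReal_le_ofReal hnumerics)

variable {c₁ : ℝ}

lemma four_mul_le_of_div_sq_le (hc₁0 : 0 < c₁) (hc₁ : c₁ < 1 / 2)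
    (hk : (p : ℝ) / c₁ ^ 2 ≤ k) : 4 * p ≤ k := by
  have hsq : c₁ ^ 2 ≤ 1 / 4 := by nlinarith
  rw [div_le_iff₀ (by positivity)] at hk
  have hk' : 4 * (p : ℝ) ≤ k := by nlinarith [k.cast_nonneg (α := ℝ)]
  exact_mod_cast hk'

lemma div_le_div_one_sub_two_mul_sq_mul {x y : ℝ} (hx : 0 ≤ x) (hy : 0 ≤ y) (hc₁0 : 0 < c₁)
    (hc₁ : c₁ < 1 / 2) : x / y ≤ x / ((1 - 2 * c₁) ^ 2 * y) := by
  have hpos : 0 < 1 - 2 * c₁ := by linarith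
  rw [mul_comm, ← div_div]
  exact le_div_self (by positivity) (by positivity) (pow_le_one₀ hpos.le (by linarith))

lemma exp_neg_div_eight_le (hc₁0 : 0 < c₁) (hc₁ : c₁ < 1 / 2) :
    Real.exp (-k / 8) ≤ Real.exp (-(k * c₁ ^ 2) / 2) := by
  have hsq : c₁ ^ 2 ≤ 1 / 4 := by nlinarith
  refine Real.exp_le_exp.2 ?_
  nlinarith [k.cast_nonneg (α := ℝ)]

end MainTheorem

/-- Per-node guarantee of the LeastSquares estimator (Lemma 3.2): with `X ∈ ℝ^{k×p}`
having rows i.i.d. `N(0, M)`, `M = LLᵀ` positive definite, noise `η` with i.i.d.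
`N(0, σ_y²)` entries, responses `B = XA + η`, least-squares solution
`Â = (XᵀX)⁻¹XᵀB` and `Δ = Â − A`, for constants `0 < c₁ < 1/2`, `c₂ > 0` and
`k ≥ p/c₁²` one has
`Pr(‖LᵀΔ‖₂ > 2σ_y c₂ √p/((1−2c₁)²√k)) ≤ exp(−kc₁²/2) + 2p·exp(−2k) + p·exp(−c₂²/2)`. -/
theorem stmt_6 (p k : ℕ) (L : Matrix (Fin p) (Fin p) ℝ) (hM : (L * Lᵀ).PosDef)
    (A : Fin p → ℝ) (σy : ℝ) (hσy : 0 < σy)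
    (c₁ c₂ : ℝ) (hc₁0 : 0 < c₁) (hc₁ : c₁ < 1 / 2) (hc₂ : 0 < c₂)
    (hk : (p : ℝ) / c₁ ^ 2 ≤ (k : ℝ)) :
    ((Measure.pi fun _ : Fin k => mvg0 L).prod
        (Measure.pi fun _ : Fin k => gaussianReal 0 ((σy ^ 2).toNNReal)))
      {ω | let X : Matrix (Fin k) (Fin p) ℝ := Matrix.of ω.1
           let B : Fin k → ℝ := X.mulVec A + ω.2
           let Δ : Fin p → ℝ := (Xᵀ * X)⁻¹.mulVec (Xᵀ.mulVec B) - A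
           2 * σy * c₂ * Real.sqrt (p : ℝ) / ((1 - 2 * c₁) ^ 2 * Real.sqrt (k : ℝ))
             < enorm' (Lᵀ.mulVec Δ)}
      ≤ ENNReal.ofReal (Real.exp (-((k : ℝ) * c₁ ^ 2) / 2)
          + 2 * (p : ℝ) * Real.exp (-2 * (k : ℝ))
          + (p : ℝ) * Real.exp (-c₂ ^ 2 / 2)) := by
  have hpk := four_mul_le_of_div_sq_le hc₁0 hc₁ hk
  refine (measure_mono fun ω hω => ?_).trans <|
    (stmt_6_general p k L hM A σy hσy c₂ hc₂.le hpk).trans <| ENNReal.ofReal_le_ofReal ?_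
  · exact (div_le_div_one_sub_two_mul_sq_mul (by positivity) (by positivity) hc₁0 hc₁).trans_lt hω
  · exact add_le_add_left (le_add_of_le_of_nonneg (exp_neg_div_eight_le hc₁0 hc₁) (by positivity)) _
end

section
/- Consider the node model: M = LLᵀ ∈ ℝ^{p×p} is positive definite, A ∈ ℝ^p, σ_y > 0. Let t be a real with 0 ≤ t ≤ 3 − 2√2, and let Â ∈ ℝ^p be a fixed vector with Δ = Â − A satisfying |ΔᵀMΔ| ≤ σ_y²·t. Let δ ∈ (0,1) and let k ≥ (32/t)·log(2/δ) be an integer. Draw k i.i.d. samples: for s = 1,…,k, X^{(s)} ~ N(0, M) (a row vector in ℝ^p) and Y^{(s)} = X^{(s)}A + η^{(s)} with independent η^{(s)} ~ N(0, σ_y²). Define σ̂_y² = (1/k)·Σ_{s=1}^k (Y^{(s)} − X^{(s)}Â)². Then Pr( (1 − √t)·σ_y² ≤ σ̂_y² ≤ (1 + √t)·σ_y² ) ≥ 1 − δ. (In the paper t = ε·p/(n·d_avg).) -/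
open MeasureTheory ProbabilityTheory Matrix

/-!
Each residual `Y - XÂ = η - XΔ` is a sum of independent centered Gaussians, hence
`N(0, v)` with `v = σ_y² + ΔᵀMΔ`, and `σ_y² ≤ v ≤ (1 + t) σ_y²`. Optimizing the Chernoff bound for
`χ²` only up to constants (`λ = ± u / (4 v)`) shows that the mean of the `k` squared residuals lies
within a factor `1 ± u` of `v` outside an event of probability `2 exp (-k u² / 8)`. Take
`u = √t / 2`: the exponent becomes `-k t / 32`, and the other half of the tolerance `√t` absorbs
the bias, since `(1 + √t / 2) (1 + t) ≤ 1 + √t` is equivalent to `√t ≤ √2 - 1`, that is, to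
`t ≤ 3 - 2 √2`.
-/

open scoped NNReal

lemma neg_sub_sq_le_log_one_sub {x : ℝ} (hx : x ≤ 1 / 2) : -x - x ^ 2 ≤ Real.log (1 - x) := by
  have h_pos : 0 < 1 - x := by linarith
  rcases le_total x 0 with hx0 | hx0
  · refine le_trans ?_ (Real.one_sub_inv_le_log_of_pos h_pos)
    have h_eq : 1 - (1 - x)⁻¹ - (-x - x ^ 2) = -x * x ^ 2 / (1 - x) := by
      field_simp
      ring
    have h_nonneg : 0 ≤ -x * x ^ 2 / (1 - x) := by
      have := neg_nonneg.2 hx0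
      positivity
    linarith
  · rw [Real.le_log_iff_exp_le h_pos, ← neg_add', Real.exp_neg, inv_le_comm₀ (Real.exp_pos _) h_pos]
    refine le_trans ?_ (Real.quadratic_le_exp_of_nonneg (by positivity))
    rw [inv_le_iff_one_le_mul₀ h_pos]
    have h_cubic : 0 ≤ 1 - x - x ^ 2 - x ^ 3 := by nlinarith [pow_le_pow_left₀ hx0 hx 2]
    nlinarith [mul_nonneg (sq_nonneg x) h_cubic]

lemma inv_sqrt_one_sub_two_mul_le_exp {l : ℝ} (hl : l ≤ 1 / 4) :
    (√(1 - 2 * l))⁻¹ ≤ Real.exp (l + 2 * l ^ 2) := by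
  have h_pos : 0 < 1 - 2 * l := by linarith
  have h_log := neg_sub_sq_le_log_one_sub (x := 2 * l) (by linarith)
  rw [← Real.exp_log (Real.sqrt_pos.2 h_pos), ← Real.exp_neg, Real.exp_le_exp,
    Real.log_sqrt h_pos.le]
  linarith

section SumOfSquares

variable {ι : Type*} [Fintype ι] {v : ℝ≥0} {l u : ℝ}

lemma mgf_sq_gaussianReal (hl : 2 * (l * v) < 1) :
    mgf (fun x ↦ x ^ 2) (gaussianReal 0 v) l = (√(1 - 2 * (l * v)))⁻¹ := by
  rcases eq_or_ne v 0 with rfl | hv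
  · simp [mgf]
  have h_density (x : ℝ) : gaussianPDFReal 0 v x • Real.exp (l * x ^ 2)
      = (√(2 * Real.pi * v))⁻¹ * Real.exp (-((1 - 2 * (l * v)) / (2 * v)) * x ^ 2) := by
    rw [gaussianPDFReal, smul_eq_mul, mul_assoc, ← Real.exp_add]
    congr 2
    field_simp
    ring
  have : 0 < 1 - 2 * (l * v) := by linarith
  simp_rw [mgf, integral_gaussianReal_eq_integral_smul hv, h_density]
  rw [integral_const_mul, integral_gaussian, ← Real.sqrt_inv, ← Real.sqrt_inv,
    ← Real.sqrt_mul (by positivity)]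
  congr 1
  field_simp

lemma mgf_sum_sq_pi_gaussianReal (hl : 2 * (l * v) < 1) :
    mgf (fun x : ι → ℝ ↦ ∑ i, x i ^ 2) (Measure.pi fun _ ↦ gaussianReal 0 v) l
      = (√(1 - 2 * (l * v)))⁻¹ ^ Fintype.card ι := by
  simp_rw [mgf, Finset.mul_sum, Real.exp_sum]
  rw [integral_fintype_prod_eq_pow (fun y ↦ Real.exp (l * y ^ 2))]
  exact congrArg (· ^ Fintype.card ι) (mgf_sq_gaussianReal hl)

lemma integrable_exp_mul_sum_sq_pi_gaussianReal (hl : 2 * (l * v) < 1) :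
    Integrable (fun x : ι → ℝ ↦ Real.exp (l * ∑ i, x i ^ 2))
      (Measure.pi fun _ ↦ gaussianReal 0 v) := by
  have : 0 < 1 - 2 * (l * v) := by linarith
  rw [← mgf_pos_iff, mgf_sum_sq_pi_gaussianReal hl]
  positivity

lemma mgf_sum_sq_pi_gaussianReal_le (hl : l * v ≤ 1 / 4) :
    mgf (fun x : ι → ℝ ↦ ∑ i, x i ^ 2) (Measure.pi fun _ ↦ gaussianReal 0 v) l
      ≤ Real.exp (Fintype.card ι * (l * v + 2 * (l * v) ^ 2)) := by
  rw [mgf_sum_sq_pi_gaussianReal (by linarith), Real.exp_nat_mul]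
  gcongr
  exact inv_sqrt_one_sub_two_mul_le_exp hl

lemma measureReal_sum_sq_ge_le (hv : v ≠ 0) (hu0 : 0 ≤ u) (hu1 : u ≤ 1) :
    (Measure.pi fun _ : ι ↦ gaussianReal 0 v).real
        {x | Fintype.card ι * ((1 + u) * v) ≤ ∑ i, x i ^ 2}
      ≤ Real.exp (-(Fintype.card ι * u ^ 2 / 8)) := by
  have hlv : u / (4 * v) * v = u / 4 := by field_simp
  refine (measure_ge_le_exp_mul_mgf (t := u / (4 * v)) _ (by positivity)
    (integrable_exp_mul_sum_sq_pi_gaussianReal (by linarith))).trans ?_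
  grw [mgf_sum_sq_pi_gaussianReal_le (by linarith), ← Real.exp_add, hlv]
  apply le_of_eq
  congr 1
  field_simp
  ring

lemma measureReal_sum_sq_le_le (hv : v ≠ 0) (hu0 : 0 ≤ u) :
    (Measure.pi fun _ : ι ↦ gaussianReal 0 v).real
        {x | ∑ i, x i ^ 2 ≤ Fintype.card ι * ((1 - u) * v)}
      ≤ Real.exp (-(Fintype.card ι * u ^ 2 / 8)) := by
  have hlv : -(u / (4 * v)) * v = -(u / 4) := by field_simp
  refine (measure_le_le_exp_mul_mgf (t := -(u / (4 * v))) _ (neg_nonpos.2 (by positivity))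
    (integrable_exp_mul_sum_sq_pi_gaussianReal (by linarith))).trans ?_
  grw [mgf_sum_sq_pi_gaussianReal_le (by linarith), ← Real.exp_add, hlv]
  apply le_of_eq
  congr 1
  field_simp
  ring

lemma one_sub_le_measureReal_mean_sq_mem_Icc (hv : v ≠ 0) (hu0 : 0 ≤ u) (hu1 : u ≤ 1) :
    1 - 2 * Real.exp (-(Fintype.card ι * u ^ 2 / 8))
      ≤ (Measure.pi fun _ : ι ↦ gaussianReal 0 v).real
        {x | 1 / (Fintype.card ι : ℝ) * ∑ i, x i ^ 2 ∈ Set.Icc ((1 - u) * v) ((1 + u) * v)} := by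
  rcases isEmpty_or_nonempty ι with hι | hι
  · refine le_trans ?_ measureReal_nonneg
    norm_num
  set good : Set (ι → ℝ) :=
    {x | 1 / (Fintype.card ι : ℝ) * ∑ i, x i ^ 2 ∈ Set.Icc ((1 - u) * v) ((1 + u) * v)}
  have h_meas : MeasurableSet good := measurableSet_Icc.preimage (by fun_prop)
  have h_cover : goodᶜ ⊆ {x | Fintype.card ι * ((1 + u) * v) ≤ ∑ i, x i ^ 2} ∪
      {x | ∑ i, x i ^ 2 ≤ Fintype.card ι * ((1 - u) * v)} := by
    intro x hx
    contrapose! hx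
    simp only [Set.mem_union, Set.mem_ofPred_eq, not_or, not_le] at hx
    have h_card : (0 : ℝ) < Fintype.card ι := mod_cast Fintype.card_pos
    simp only [good, Set.mem_compl_iff, not_not, Set.mem_ofPred_eq, one_div, inv_mul_eq_div]
    exact ⟨(le_div_iff₀' h_card).2 hx.2.le, (div_le_iff₀' h_card).2 hx.1.le⟩
  have h_bad := (measureReal_mono (μ := Measure.pi fun _ ↦ gaussianReal 0 v) h_cover).trans
    (measureReal_union_le _ _)
  rw [probReal_compl_eq_one_sub h_meas] at h_bad
  linarith [measureReal_sum_sq_ge_le (ι := ι) hv hu0 hu1,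
    measureReal_sum_sq_le_le (ι := ι) hv hu0]

end SumOfSquares

section ResidualLaw

lemma measurePreserving_dotProduct_pi_gaussianReal {ι : Type*} [Fintype ι] (c : ι → ℝ) :
    MeasurePreserving (fun x ↦ x ⬝ᵥ c) (Measure.pi fun _ ↦ gaussianReal 0 1)
      (gaussianReal 0 (c ⬝ᵥ c).toNNReal) := by
  have h_toLp : MeasurePreserving (WithLp.toLp 2) (Measure.pi fun _ : ι ↦ gaussianReal 0 1)
      (stdGaussian (EuclideanSpace ℝ ι)) := ⟨by fun_prop, map_pi_eq_stdGaussian⟩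
  have h_inner : MeasurePreserving (innerSL ℝ (WithLp.toLp 2 c)) (stdGaussian (EuclideanSpace ℝ ι))
      (gaussianReal 0 (c ⬝ᵥ c).toNNReal) := by
    refine ⟨by fun_prop, ?_⟩
    rw [IsGaussian.map_eq_gaussianReal, integral_strongDual_stdGaussian, variance_dual_stdGaussian,
      innerSL_apply_norm, ← real_inner_self_eq_norm_sq, EuclideanSpace.inner_toLp_toLp,
      star_trivial]
  exact h_inner.comp h_toLp

lemma measurePreserving_dotProduct_mvg0 {p : ℕ} (L : Matrix (Fin p) (Fin p) ℝ) (c : Fin p → ℝ) :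
    MeasurePreserving (fun x ↦ x ⬝ᵥ c) (mvg0 L)
      (gaussianReal 0 (c ⬝ᵥ (L * Lᵀ) *ᵥ c).toNNReal) := by
  have h_transpose : (fun x ↦ x ⬝ᵥ c) ∘ (fun x ↦ L *ᵥ x) = fun x ↦ x ⬝ᵥ (c ᵥ* L) := by
    ext x
    rw [Function.comp_apply, dotProduct_comm, dotProduct_mulVec, dotProduct_comm]
  have h_quad : c ⬝ᵥ (L * Lᵀ) *ᵥ c = (c ᵥ* L) ⬝ᵥ (c ᵥ* L) := by
    rw [← mulVec_mulVec, dotProduct_mulVec, mulVec_transpose]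
  refine ⟨by fun_prop, ?_⟩
  rw [mvg0, Measure.map_map (by fun_prop) (by fun_prop), h_transpose, h_quad]
  exact (measurePreserving_dotProduct_pi_gaussianReal (c ᵥ* L)).map_eq

lemma measurePreserving_pi_prod {ι α β γ : Type*} [Fintype ι] [MeasurableSpace α]
    [MeasurableSpace β] [MeasurableSpace γ] {μ : Measure α} {ν : Measure β} {ρ : Measure γ}
    [SigmaFinite μ] [SigmaFinite ν] [SigmaFinite ρ] {f : α × β → γ}
    (hf : MeasurePreserving f (μ.prod ν) ρ) :
    MeasurePreserving (fun (ω : (ι → α) × (ι → β)) i ↦ f (ω.1 i, ω.2 i))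
      ((Measure.pi fun _ ↦ μ).prod (Measure.pi fun _ ↦ ν)) (Measure.pi fun _ ↦ ρ) :=
  (measurePreserving_pi _ _ fun _ ↦ hf).comp
    (measurePreserving_arrowProdEquivProdArrow α β ι (fun _ ↦ μ) fun _ ↦ ν).symm

lemma measurePreserving_add_gaussianReal {E : Type*} [MeasurableSpace E] {μ : Measure E}
    [SFinite μ] {f : E → ℝ} {a m : ℝ} {r w : ℝ≥0} (hf : MeasurePreserving f μ (gaussianReal a r)) :
    MeasurePreserving (fun z : E × ℝ ↦ f z.1 + z.2) (μ.prod (gaussianReal m w))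
      (gaussianReal (a + m) (r + w)) := by
  have h_add : MeasurePreserving (fun z : ℝ × ℝ ↦ z.1 + z.2)
      ((gaussianReal a r).prod (gaussianReal m w)) (gaussianReal (a + m) (r + w)) :=
    ⟨by fun_prop, gaussianReal_conv_gaussianReal⟩
  exact h_add.comp (hf.prod (.id _))

end ResidualLaw

lemma sq_sqrt_add_two_mul_sqrt_le_one {t : ℝ} (ht : t ≤ 3 - 2 * √2) : √t ^ 2 + 2 * √t ≤ 1 := by
  have h_two : √2 ^ 2 = 2 := Real.sq_sqrt zero_le_two
  have h_one : 1 ≤ √2 := Real.one_le_sqrt.2 one_le_two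
  have h_sqrt : √t ≤ √2 - 1 :=
    Real.sqrt_le_iff.2 ⟨by linarith, by linarith [sub_sq (√2) 1]⟩
  nlinarith [Real.sqrt_nonneg t]

lemma Icc_half_tolerance_subset_Icc {q v w : ℝ} (hq0 : 0 ≤ q) (hq : q ^ 2 + 2 * q ≤ 1) (hw : 0 ≤ w)
    (hwv : w ≤ v) (hvw : v ≤ (1 + q ^ 2) * w) :
    Set.Icc ((1 - q / 2) * v) ((1 + q / 2) * v) ⊆ Set.Icc ((1 - q) * w) ((1 + q) * w) := by
  refine Set.Icc_subset_Icc ?_ ?_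
  · have : 0 ≤ 1 - q / 2 := by nlinarith
    calc (1 - q) * w ≤ (1 - q / 2) * w := by gcongr; linarith
      _ ≤ (1 - q / 2) * v := by gcongr
  · have h_bias : (1 + q / 2) * (1 + q ^ 2) ≤ 1 + q := by nlinarith
    calc (1 + q / 2) * v ≤ (1 + q / 2) * ((1 + q ^ 2) * w) := by gcongr
      _ = (1 + q / 2) * (1 + q ^ 2) * w := by ring
      _ ≤ (1 + q) * w := by gcongr

lemma two_mul_exp_neg_le_of_log_le {δ x : ℝ} (hδ : 0 < δ) (hx : Real.log (2 / δ) ≤ x) :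
    2 * Real.exp (-x) ≤ δ := by
  rw [Real.exp_neg, ← div_eq_mul_inv, div_le_comm₀ (Real.exp_pos x) hδ]
  exact (Real.log_le_iff_le_exp (by positivity)).1 hx

theorem stmt_15_general {ι E : Type*} [Fintype ι] [MeasurableSpace E] {μ : Measure E}
    {g ghat : E → ℝ} {r w : ℝ≥0} {t δ : ℝ}
    (h_err : MeasurePreserving (fun x ↦ g x - ghat x) μ (gaussianReal 0 r)) (hw : w ≠ 0)
    (ht : t ≤ 3 - 2 * √2) (hr : r ≤ w * t) (hδ : 0 < δ)
    (hk : 32 * Real.log (2 / δ) ≤ Fintype.card ι * t) :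
    ENNReal.ofReal (1 - δ) ≤
      ((Measure.pi fun _ : ι ↦ μ).prod (Measure.pi fun _ : ι ↦ gaussianReal 0 w))
        {ω | 1 / (Fintype.card ι : ℝ) * ∑ s, (g (ω.1 s) + ω.2 s - ghat (ω.1 s)) ^ 2
          ∈ Set.Icc ((1 - √t) * w) ((1 + √t) * w)} := by
  have : IsProbabilityMeasure μ := h_err.hasLaw.isProbabilityMeasure
  have ht0 : 0 ≤ t := nonneg_of_mul_nonneg_right (r.2.trans hr) (by positivity)
  have h_tol := sq_sqrt_add_two_mul_sqrt_le_one ht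
  have h_law := measurePreserving_pi_prod (ι := ι)
    (measurePreserving_add_gaussianReal (m := 0) (w := w) h_err)
  simp_rw [sub_add_eq_add_sub, add_zero] at h_law
  have h_conc := one_sub_le_measureReal_mean_sq_mem_Icc (ι := ι) (v := r + w) (u := √t / 2)
    (by positivity) (by positivity) (by nlinarith [Real.sqrt_nonneg t])
  have h_incl := Icc_half_tolerance_subset_Icc (v := (r + w : ℝ≥0)) (w := w) (Real.sqrt_nonneg t)
    h_tol w.2 (by simp) (by rw [Real.sq_sqrt ht0]; push_cast; linarith)
  have h_delta := two_mul_exp_neg_le_of_log_le (x := Fintype.card ι * (√t / 2) ^ 2 / 8) hδ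
    (by rw [div_pow, Real.sq_sqrt ht0]; linarith)
  rw [← h_law.hasLaw.measureReal_eq (measurableSet_Icc.preimage (by fun_prop))] at h_conc
  refine (ENNReal.ofReal_le_iff_le_toReal (measure_ne_top _ _)).2 ?_
  exact (sub_le_sub_left h_delta 1).trans (h_conc.trans (measureReal_mono fun _ hω ↦ h_incl hω))

/-- Single-node guarantee of VarianceRecovery (Lemma 2.12): with `M = LLᵀ` positive
definite, `0 ≤ t ≤ 3 − 2√2`, a fixed estimate `Â` with `|ΔᵀMΔ| ≤ σ_y²t` for
`Δ = Â − A`, and `k ≥ (32/t)·log(2/δ)` i.i.d. samples `X⁽ˢ⁾ ~ N(0,M)`,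
`Y⁽ˢ⁾ = X⁽ˢ⁾A + η⁽ˢ⁾` with independent `η⁽ˢ⁾ ~ N(0,σ_y²)`, the empirical residual
variance `σ̂_y² = (1/k)Σ (Y⁽ˢ⁾ − X⁽ˢ⁾Â)²` satisfies
`(1 − √t)σ_y² ≤ σ̂_y² ≤ (1 + √t)σ_y²` with probability at least `1 − δ`. -/
theorem stmt_15 (p : ℕ) (L : Matrix (Fin p) (Fin p) ℝ) (hM : (L * Lᵀ).PosDef)
    (A Ahat : Fin p → ℝ) (σy t δ : ℝ) (hσy : 0 < σy)
    (ht0 : 0 ≤ t) (ht1 : t ≤ 3 - 2 * Real.sqrt 2)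
    (hΔ : |(Ahat - A) ⬝ᵥ (L * Lᵀ).mulVec (Ahat - A)| ≤ σy ^ 2 * t)
    (hδ0 : 0 < δ) (hδ1 : δ < 1) (k : ℕ)
    (hk : 32 * Real.log (2 / δ) ≤ (k : ℝ) * t) :
    ENNReal.ofReal (1 - δ) ≤
      ((Measure.pi fun _ : Fin k => mvg0 L).prod
          (Measure.pi fun _ : Fin k => gaussianReal 0 ((σy ^ 2).toNNReal)))
        {ω | (1 - Real.sqrt t) * σy ^ 2
              ≤ (1 / (k : ℝ)) * ∑ s : Fin k, (ω.1 s ⬝ᵥ A + ω.2 s - ω.1 s ⬝ᵥ Ahat) ^ 2 ∧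
             (1 / (k : ℝ)) * ∑ s : Fin k, (ω.1 s ⬝ᵥ A + ω.2 s - ω.1 s ⬝ᵥ Ahat) ^ 2
              ≤ (1 + Real.sqrt t) * σy ^ 2} := by
  rw [← neg_sub A Ahat, mulVec_neg, neg_dotProduct_neg] at hΔ
  have h_err := measurePreserving_dotProduct_mvg0 L (A - Ahat)
  simp_rw [dotProduct_sub] at h_err
  have h_var := (Real.coe_toNNReal' _).trans_le ((max_le (le_abs_self _) (abs_nonneg _)).trans hΔ)
  have hσ : ((σy ^ 2).toNNReal : ℝ) = σy ^ 2 := Real.coe_toNNReal _ (sq_nonneg σy)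
  have h_prob := stmt_15_general (ι := Fin k) (w := (σy ^ 2).toNNReal) h_err (by positivity) ht1
    (by rwa [hσ]) hδ0 (by rwa [Fintype.card_fin])
  rw [hσ, Fintype.card_fin] at h_prob
  exact h_prob
end
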